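/- arXiv:1811.12588 — 4 statements merged into one kernel-verified Lean document; each statement's English description precedes it below -/
import Mathlib

section
/- Let R be a rigid subcategory of C and let X be a subcategory of C contained in R∗R[1]. Then X is a two-term R[1]-cluster tilting subcategory of C if and only if X is a contravariantly finite two-term maximal R[1]-rigid subcategory of C. -/
/-!
Setting: `C` is a Hom-finite Krull–Schmidt `k`-linear triangulated category over an
algebraically closed field `k` (Krull–Schmidt is encoded as Hom-finiteness together with
idempotent completeness). Subcategories are identified with their classes of objects and
are always assumed full, closed under isomorphisms, direct sums and direct summands.
-/

open CategoryTheory CategoryTheory.Limits CategoryTheory.Pretriangulated Opposite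

universe v u

variable {C : Type u} [Category.{v} C] [Preadditive C] [HasZeroObject C] [HasShift C ℤ]
  [∀ n : ℤ, (shiftFunctor C n).Additive] [Pretriangulated C]

/-- `Y` is a direct summand (retract) of `X`. -/
def IsRetractOf {D : Type*} [Category D] (Y X : D) : Prop :=
  ∃ (s : Y ⟶ X) (r : X ⟶ Y), s ≫ r = 𝟙 Y

/-- `S` is a direct sum (biproduct) of `F` and `G`. -/
def IsDirectSumOf {D : Type*} [Category D] [Preadditive D] (S F G : D) : Prop :=
  ∃ (i : F ⟶ S) (j : G ⟶ S) (p : S ⟶ F) (q : S ⟶ G),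
    i ≫ p = 𝟙 F ∧ j ≫ q = 𝟙 G ∧ i ≫ q = 0 ∧ j ≫ p = 0 ∧ p ≫ i + q ≫ j = 𝟙 S

/-- A subcategory of an additive category, identified with its class of objects:
closed under isomorphisms, finite direct sums and direct summands. -/
def IsSubcat {D : Type*} [Category D] [Preadditive D] (S : Set D) : Prop :=
  (∀ ⦃X Y : D⦄, (X ≅ Y) → X ∈ S → Y ∈ S) ∧
  (∀ ⦃F G T : D⦄, F ∈ S → G ∈ S → IsDirectSumOf T F G → T ∈ S) ∧
  (∀ ⦃X Y : D⦄, X ∈ S → IsRetractOf Y X → Y ∈ S)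

/-- `f : X ⟶ A` is a right `𝓧`-approximation of `A`:
every map `X' ⟶ A` with `X' ∈ 𝓧` factors through `f`. -/
def IsRightApprox {D : Type*} [Category D] (𝓧 : Set D) {X A : D} (f : X ⟶ A) : Prop :=
  ∀ X' ∈ 𝓧, ∀ g : X' ⟶ A, ∃ h : X' ⟶ X, h ≫ f = g

/-- `f : A ⟶ X` is a left `𝓧`-approximation of `A`:
every map `A ⟶ X'` with `X' ∈ 𝓧` factors through `f`. -/
def IsLeftApprox {D : Type*} [Category D] (𝓧 : Set D) {A X : D} (f : A ⟶ X) : Prop :=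
  ∀ X' ∈ 𝓧, ∀ g : A ⟶ X', ∃ h : X ⟶ X', f ≫ h = g

/-- `𝓧` is contravariantly finite: every object admits a right `𝓧`-approximation. -/
def ContravariantlyFinite {D : Type*} [Category D] (𝓧 : Set D) : Prop :=
  ∀ A : D, ∃ X ∈ 𝓧, ∃ f : X ⟶ A, IsRightApprox 𝓧 f

/-- `𝓧` is covariantly finite: every object admits a left `𝓧`-approximation. -/
def CovariantlyFinite {D : Type*} [Category D] (𝓧 : Set D) : Prop :=
  ∀ A : D, ∃ X ∈ 𝓧, ∃ f : A ⟶ X, IsLeftApprox 𝓧 f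

/-- `𝓧` is functorially finite. -/
def FunctoriallyFinite {D : Type*} [Category D] (𝓧 : Set D) : Prop :=
  ContravariantlyFinite 𝓧 ∧ CovariantlyFinite 𝓧

/-- `𝓧 ∨ add M`: the smallest subcategory containing `𝓧` and `M`. -/
def veeAdd {D : Type*} [Category D] [Preadditive D] (𝓧 : Set D) (M : D) : Set D :=
  ⋂₀ {T : Set D | IsSubcat T ∧ 𝓧 ⊆ T ∧ M ∈ T}

/-- The shift `𝓢⟦n⟧` of a subcategory (closed under isomorphism). -/
def shiftSet (𝓢 : Set C) (n : ℤ) : Set C := {Y | ∃ X ∈ 𝓢, Nonempty (Y ≅ X⟦n⟧)}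

/-- `𝓐 ∗ 𝓑`: the class of objects `M` admitting a distinguished triangle
`A → M → B → A⟦1⟧` with `A ∈ 𝓐` and `B ∈ 𝓑`. -/
def starSet (𝓐 𝓑 : Set C) : Set C :=
  {M | ∃ A ∈ 𝓐, ∃ B ∈ 𝓑, ∃ (f : A ⟶ M) (g : M ⟶ B) (h : B ⟶ A⟦(1:ℤ)⟧),
    Triangle.mk f g h ∈ distTriang C}

/-- `𝓡 ∗ 𝓡[1]`, the class of two-term objects with respect to `𝓡`. -/
def twoTerm (𝓡 : Set C) : Set C := starSet 𝓡 (shiftSet 𝓡 1)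

/-- `𝓡` is rigid: `Hom(R, R'[1]) = 0` for all `R, R' ∈ 𝓡`. -/
def IsRigidSubcat (𝓡 : Set C) : Prop :=
  ∀ R ∈ 𝓡, ∀ R' ∈ 𝓡, ∀ φ : R ⟶ R'⟦(1:ℤ)⟧, φ = 0

/-- `φ` lies in the ideal `[𝓡[1]]` of morphisms factoring through an object of `𝓡⟦1⟧`. -/
def InShiftIdeal (𝓡 : Set C) {A B : C} (φ : A ⟶ B) : Prop :=
  ∃ R ∈ 𝓡, ∃ (a : A ⟶ R⟦(1:ℤ)⟧) (b : R⟦(1:ℤ)⟧ ⟶ B), φ = a ≫ b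

/-- `𝓧` is `𝓡[1]`-rigid: `[𝓡[1]](𝓧, 𝓧[1]) = 0`. -/
def IsRelRigid (𝓡 𝓧 : Set C) : Prop :=
  ∀ X ∈ 𝓧, ∀ X' ∈ 𝓧, ∀ φ : X ⟶ X'⟦(1:ℤ)⟧, InShiftIdeal 𝓡 φ → φ = 0

/-- `[𝓡[1]](M, 𝓧[1]) = 0`. -/
def relOrthTo (𝓡 𝓧 : Set C) (M : C) : Prop :=
  ∀ X ∈ 𝓧, ∀ φ : M ⟶ X⟦(1:ℤ)⟧, InShiftIdeal 𝓡 φ → φ = 0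

/-- `[𝓡[1]](𝓧, M[1]) = 0`. -/
def relOrthFrom (𝓡 𝓧 : Set C) (M : C) : Prop :=
  ∀ X ∈ 𝓧, ∀ φ : X ⟶ M⟦(1:ℤ)⟧, InShiftIdeal 𝓡 φ → φ = 0

/-- `𝓧 ⊆ 𝓡 ∗ 𝓡[1]` is two-term maximal `𝓡[1]`-rigid: it is `𝓡[1]`-rigid and for every
`M ∈ 𝓡 ∗ 𝓡[1]`, `[𝓡[1]](𝓧 ∨ add M, (𝓧 ∨ add M)[1]) = 0` implies `M ∈ 𝓧`. -/
def IsTwoTermMaxRelRigid (𝓡 𝓧 : Set C) : Prop :=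
  𝓧 ⊆ twoTerm 𝓡 ∧ IsRelRigid 𝓡 𝓧 ∧
  ∀ M ∈ twoTerm 𝓡, IsRelRigid 𝓡 (veeAdd 𝓧 M) → M ∈ 𝓧

/-- `𝓧 ⊆ 𝓡 ∗ 𝓡[1]` is two-term weak `𝓡[1]`-cluster tilting: `𝓡 ⊆ 𝓧[-1] ∗ 𝓧` and
`𝓧 = {M ∈ 𝓡 ∗ 𝓡[1] : [𝓡[1]](M, 𝓧[1]) = 0 and [𝓡[1]](𝓧, M[1]) = 0}`. -/
def IsTwoTermWeakRelCT (𝓡 𝓧 : Set C) : Prop :=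
  𝓧 ⊆ twoTerm 𝓡 ∧
  (∀ R ∈ 𝓡, R ∈ starSet (shiftSet 𝓧 (-1)) 𝓧) ∧
  (∀ M : C, M ∈ 𝓧 ↔ M ∈ twoTerm 𝓡 ∧ relOrthTo 𝓡 𝓧 M ∧ relOrthFrom 𝓡 𝓧 M)

/-- `𝓧 ⊆ 𝓡 ∗ 𝓡[1]` is two-term `𝓡[1]`-cluster tilting: `𝓧` is contravariantly finite and
`𝓧 = {M ∈ 𝓡 ∗ 𝓡[1] : [𝓡[1]](M, 𝓧[1]) = 0 and [𝓡[1]](𝓧, M[1]) = 0}`. -/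
def IsTwoTermRelCT (𝓡 𝓧 : Set C) : Prop :=
  𝓧 ⊆ twoTerm 𝓡 ∧ ContravariantlyFinite 𝓧 ∧
  (∀ M : C, M ∈ 𝓧 ↔ M ∈ twoTerm 𝓡 ∧ relOrthTo 𝓡 𝓧 M ∧ relOrthFrom 𝓡 𝓧 M)

section Helpers

lemma InShiftIdeal.precomp {𝓡 : Set C} {A' A B : C} {φ : A ⟶ B} (h : InShiftIdeal 𝓡 φ)
    (s : A' ⟶ A) : InShiftIdeal 𝓡 (s ≫ φ) := by
  obtain ⟨R, hR, a, b, rfl⟩ := h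
  exact ⟨R, hR, s ≫ a, b, by simp⟩

lemma InShiftIdeal.postcomp {𝓡 : Set C} {A B B' : C} {φ : A ⟶ B} (h : InShiftIdeal 𝓡 φ)
    (s : B ⟶ B') : InShiftIdeal 𝓡 (φ ≫ s) := by
  obtain ⟨R, hR, a, b, rfl⟩ := h
  exact ⟨R, hR, a, b ≫ s, by simp⟩

lemma isSubcat_relOrthTo (𝓡 S : Set C) : IsSubcat {M : C | relOrthTo 𝓡 S M} := by
  have retr : ∀ ⦃X Y : C⦄, X ∈ {M : C | relOrthTo 𝓡 S M} → IsRetractOf Y X →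
      Y ∈ {M : C | relOrthTo 𝓡 S M} := by
    rintro X Y hX ⟨s, r, hsr⟩ V hV φ hφ
    have h1 := hX V hV (r ≫ φ) (hφ.precomp r)
    rw [← Category.id_comp φ, ← hsr, Category.assoc, h1, comp_zero]
  refine ⟨fun X Y e hX => retr hX ⟨e.inv, e.hom, e.inv_hom_id⟩, ?_, retr⟩
  rintro F G T hF hG ⟨i, j, p, q, -, -, -, -, h⟩ V hV φ hφ
  have h1 := hF V hV (i ≫ φ) (hφ.precomp i)
  have h2 := hG V hV (j ≫ φ) (hφ.precomp j)
  rw [← Category.id_comp φ, ← h, Preadditive.add_comp, Category.assoc, Category.assoc, h1, h2,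
    comp_zero, comp_zero, add_zero]

lemma isSubcat_relOrthFrom (𝓡 S : Set C) : IsSubcat {M : C | relOrthFrom 𝓡 S M} := by
  have retr : ∀ ⦃X Y : C⦄, X ∈ {M : C | relOrthFrom 𝓡 S M} → IsRetractOf Y X →
      Y ∈ {M : C | relOrthFrom 𝓡 S M} := by
    rintro X Y hX ⟨s, r, hsr⟩ V hV φ hφ
    have h1 := hX V hV (φ ≫ s⟦(1:ℤ)⟧') (hφ.postcomp _)
    rw [← Category.comp_id φ, ← CategoryTheory.Functor.map_id, ← hsr, Functor.map_comp, ← Category.assoc, h1,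
      zero_comp]
  refine ⟨fun X Y e hX => retr hX ⟨e.inv, e.hom, e.inv_hom_id⟩, ?_, retr⟩
  rintro F G T hF hG ⟨i, j, p, q, -, -, -, -, h⟩ V hV φ hφ
  have h1 := hF V hV (φ ≫ p⟦(1:ℤ)⟧') (hφ.postcomp _)
  have h2 := hG V hV (φ ≫ q⟦(1:ℤ)⟧') (hφ.postcomp _)
  rw [← Category.comp_id φ, ← CategoryTheory.Functor.map_id, ← h, Functor.map_add, Functor.map_comp,
    Functor.map_comp, Preadditive.comp_add, ← Category.assoc, ← Category.assoc, h1, h2,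
    zero_comp, zero_comp, add_zero]

lemma veeAdd_subset {𝓧 T : Set C} {M : C} (hT : IsSubcat T) (h : 𝓧 ⊆ T) (hM : M ∈ T) :
    veeAdd 𝓧 M ⊆ T := fun _ hA => hA T ⟨hT, h, hM⟩

lemma isRelRigid_veeAdd {𝓡 𝓧 : Set C} {M : C} (hX : IsRelRigid 𝓡 𝓧)
    (h1 : relOrthTo 𝓡 𝓧 M) (h2 : relOrthFrom 𝓡 𝓧 M)
    (h3 : ∀ φ : M ⟶ M⟦(1:ℤ)⟧, InShiftIdeal 𝓡 φ → φ = 0) :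
    IsRelRigid 𝓡 (veeAdd 𝓧 M) := by
  have a1 : veeAdd 𝓧 M ⊆ {A | relOrthTo 𝓡 𝓧 A} :=
    veeAdd_subset (isSubcat_relOrthTo _ _) (fun A hA V hV => hX A hA V hV) h1
  have a2 : veeAdd 𝓧 M ⊆ {A | relOrthTo 𝓡 {M} A} := by
    refine veeAdd_subset (isSubcat_relOrthTo _ _) ?_ ?_
    · rintro A hA V rfl
      exact h2 A hA
    · rintro V rfl
      exact h3
  have a3 : veeAdd 𝓧 M ⊆ {A | relOrthFrom 𝓡 (veeAdd 𝓧 M) A} :=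
    veeAdd_subset (isSubcat_relOrthFrom _ _) (fun A hA V hV => a1 hV A hA)
      (fun V hV => a2 hV M rfl)
  exact fun A hA B hB => a3 hB A hA

lemma rigid_shiftSet {𝓡 : Set C} (h𝓡 : IsRigidSubcat 𝓡) {R B : C} (hR : R ∈ 𝓡)
    (hB : B ∈ shiftSet 𝓡 1) (φ : R ⟶ B) : φ = 0 := by
  obtain ⟨R', hR', ⟨e⟩⟩ := hB
  rw [← cancel_mono e.hom, zero_comp]
  exact h𝓡 R hR R' hR' _

/-- Exactness at the shifted middle term. -/
lemma exact_shift₂ {A Z B : C} {i : A ⟶ Z} {j : Z ⟶ B} {φ : B ⟶ A⟦(1:ℤ)⟧}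
    (hT : Triangle.mk i j φ ∈ distTriang C) {P : C} (b : P ⟶ Z⟦(1:ℤ)⟧)
    (hb : b ≫ j⟦(1:ℤ)⟧' = 0) : ∃ c : P ⟶ A⟦(1:ℤ)⟧, b = c ≫ i⟦(1:ℤ)⟧' := by
  obtain ⟨c, hc⟩ := Triangle.coyoneda_exact₃ _ (rot_of_distTriang _ (rot_of_distTriang _ hT)) b
    (by
      change b ≫ (-(j⟦(1:ℤ)⟧')) = 0
      rw [Preadditive.comp_neg, hb, neg_zero])
  change P ⟶ A⟦(1:ℤ)⟧ at c
  change b = c ≫ (-(i⟦(1:ℤ)⟧')) at hc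
  exact ⟨-c, by rw [hc, Preadditive.comp_neg, Preadditive.neg_comp]⟩

lemma exists_good {𝓡 𝓧 : Set C} (h𝓡sub : IsSubcat 𝓡) (h𝓡 : IsRigidSubcat 𝓡)
    (hcf : ContravariantlyFinite 𝓧) (hmax : IsTwoTermMaxRelRigid 𝓡 𝓧) {R : C} (hR : R ∈ 𝓡)
    {M : C} (hM : relOrthTo 𝓡 𝓧 M) :
    ∃ X ∈ 𝓧, ∃ u : X ⟶ R⟦(1:ℤ)⟧, ∀ a : M ⟶ R⟦(1:ℤ)⟧, ∃ m : M ⟶ X, a = m ≫ u := by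
  obtain ⟨htt, hrig, hmax⟩ := hmax
  obtain ⟨X₀, hX₀, u, hu⟩ := hcf (R⟦(1:ℤ)⟧)
  refine ⟨X₀, hX₀, u, fun a => ?_⟩
  obtain ⟨R₀, hR₀, B, hB, f, g, h, hT⟩ := htt hX₀
  obtain ⟨w, hw⟩ := Triangle.yoneda_exact₂ _ hT u (h𝓡 R₀ hR₀ R hR _)
  change B ⟶ _ at w
  change u = g ≫ w at hw
  have hgh : g ≫ h = 0 := comp_distTriang_mor_zero₂₃ _ hT
  let A : C := R₀ ⊞ R
  have hA : A ∈ 𝓡 := h𝓡sub.2.1 hR₀ hR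
    ⟨biprod.inl, biprod.inr, biprod.fst, biprod.snd, by simp, by simp, by simp, by simp,
      biprod.total⟩
  let il : R₀⟦(1:ℤ)⟧ ⟶ A⟦(1:ℤ)⟧ := (biprod.inl : R₀ ⟶ R₀ ⊞ R)⟦(1:ℤ)⟧'
  let ir : R⟦(1:ℤ)⟧ ⟶ A⟦(1:ℤ)⟧ := (biprod.inr : R ⟶ R₀ ⊞ R)⟦(1:ℤ)⟧'
  let pl : A⟦(1:ℤ)⟧ ⟶ R₀⟦(1:ℤ)⟧ := (biprod.fst : R₀ ⊞ R ⟶ R₀)⟦(1:ℤ)⟧'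
  let pr : A⟦(1:ℤ)⟧ ⟶ R⟦(1:ℤ)⟧ := (biprod.snd : R₀ ⊞ R ⟶ R)⟦(1:ℤ)⟧'
  have e1 : il ≫ pl = 𝟙 _ := by simp only [il, pl]; rw [← Functor.map_comp]; simp
  have e2 : ir ≫ pr = 𝟙 _ := by simp only [ir, pr]; rw [← Functor.map_comp]; simp
  have e3 : il ≫ pr = 0 := by simp only [il, pr]; rw [← Functor.map_comp]; simp
  have e4 : ir ≫ pl = 0 := by simp only [ir, pl]; rw [← Functor.map_comp]; simp
  have e5 : pl ≫ il + pr ≫ ir = 𝟙 _ := by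
    simp only [ir, pl, il, pr]
    rw [← Functor.map_comp, ← Functor.map_comp, ← Functor.map_add, biprod.total,
      CategoryTheory.Functor.map_id]
  obtain ⟨φ, hφ⟩ : ∃ φ : B ⟶ A⟦(1:ℤ)⟧, φ = h ≫ il + w ≫ ir := ⟨_, rfl⟩
  have φl : φ ≫ pl = h := by simp [hφ, e1, e4]
  have φr : φ ≫ pr = w := by simp [hφ, e2, e3]
  obtain ⟨Z, i, j, hTZ⟩ := distinguished_cocone_triangle₂ φ
  have hφi : φ ≫ i⟦(1:ℤ)⟧' = 0 := comp_distTriang_mor_zero₃₁ _ hTZ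
  have hjφ : j ≫ φ = 0 := comp_distTriang_mor_zero₂₃ _ hTZ
  have hZtt : Z ∈ twoTerm 𝓡 := ⟨A, hA, B, hB, i, j, φ, hTZ⟩
  -- (1)
  have h1 : relOrthFrom 𝓡 𝓧 Z := by
    rintro X' hX' ψ ⟨R', hR', a, b, rfl⟩
    obtain ⟨b', hb'⟩ := (shiftFunctor C (1:ℤ)).map_surjective (b ≫ j⟦(1:ℤ)⟧')
    obtain ⟨b₀, rfl⟩ := exact_shift₂ hTZ b (by
      rw [← hb', rigid_shiftSet h𝓡 hR' hB b', Functor.map_zero])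
    obtain ⟨x, hx⟩ : ∃ x : X' ⟶ A⟦(1:ℤ)⟧, x = a ≫ b₀ := ⟨_, rfl⟩
    have hz : (x ≫ pl) ≫ f⟦(1:ℤ)⟧' = 0 :=
      hrig X' hX' X₀ hX₀ _ ⟨R₀, hR₀, _, _, rfl⟩
    obtain ⟨c, hc⟩ := Triangle.coyoneda_exact₁ _ hT (x ≫ pl) hz
    change X' ⟶ B at c
    change x ≫ pl = c ≫ h at hc
    obtain ⟨e, he⟩ := hu X' hX' (x ≫ pr - c ≫ w)
    have hxc : x = (c + e ≫ g) ≫ φ := by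
      have t1 : (c + e ≫ g) ≫ h = x ≫ pl := by simp [hc, hgh]
      have t2 : (c + e ≫ g) ≫ w = x ≫ pr := by
        rw [hw] at he
        simp [he]
      rw [hφ, Preadditive.comp_add, ← Category.assoc, ← Category.assoc, t1, t2, Category.assoc,
        Category.assoc, ← Preadditive.comp_add, e5, Category.comp_id]
    rw [← Category.assoc, ← hx, hxc, Category.assoc, hφi, comp_zero]
  -- (2)
  have h2 : ∀ V : C, relOrthFrom 𝓡 𝓧 V → ∀ ψ : Z ⟶ V⟦(1:ℤ)⟧, InShiftIdeal 𝓡 ψ → ψ = 0 := by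
    rintro V hV ψ ⟨R', hR', a, b, rfl⟩
    obtain ⟨t, ht⟩ := Triangle.yoneda_exact₂ _ hTZ a (h𝓡 A hA R' hR' _)
    change B ⟶ _ at t
    change a = j ≫ t at ht
    have hz : g ≫ t ≫ b = 0 := hV X₀ hX₀ _ ⟨R', hR', g ≫ t, b, by simp⟩
    obtain ⟨s, hs⟩ := Triangle.yoneda_exact₃ _ hT (t ≫ b) hz
    change R₀⟦(1:ℤ)⟧ ⟶ _ at s
    change t ≫ b = h ≫ s at hs
    rw [ht, Category.assoc, hs, ← φl, Category.assoc, ← Category.assoc, hjφ, zero_comp]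
  have hZ : Z ∈ 𝓧 := hmax Z hZtt (isRelRigid_veeAdd hrig
    (fun V hV => h2 V (fun X hX => hrig X hX V hV)) h1 (h2 Z h1))
  -- conclusion
  have hz : (a ≫ ir) ≫ i⟦(1:ℤ)⟧' = 0 := hM Z hZ _ ⟨R, hR, a, ir ≫ i⟦(1:ℤ)⟧', by simp⟩
  obtain ⟨c, hc⟩ := Triangle.coyoneda_exact₁ _ hTZ (a ≫ ir) hz
  change M ⟶ B at c
  change a ≫ ir = c ≫ φ at hc
  have hch : c ≫ h = 0 := by
    rw [← φl, ← Category.assoc, ← hc, Category.assoc, e4, comp_zero]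
  have hcw : c ≫ w = a := by
    rw [← φr, ← Category.assoc, ← hc, Category.assoc, e2, Category.comp_id]
  obtain ⟨m, hm⟩ := Triangle.coyoneda_exact₃ _ hT c hch
  change M ⟶ X₀ at m
  change c = m ≫ g at hm
  exact ⟨m, by rw [hw, ← hcw, hm, Category.assoc]⟩

end Helpers

/-- **Theorem (Statement 0).** Let `𝓡` be a rigid subcategory of `C` and `𝓧 ⊆ 𝓡 ∗ 𝓡[1]`
a subcategory. Then `𝓧` is two-term `𝓡[1]`-cluster tilting if and only if `𝓧` is a
contravariantly finite two-term maximal `𝓡[1]`-rigid subcategory. -/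
theorem twoTermRelCT_iff_contravariantlyFinite_maxRelRigid
    (k : Type*) [Field k] [IsAlgClosed k] [Linear k C]
    [∀ X Y : C, FiniteDimensional k (X ⟶ Y)] [IsIdempotentComplete C]
    (𝓡 𝓧 : Set C) (h𝓡sub : IsSubcat 𝓡) (h𝓡 : IsRigidSubcat 𝓡)
    (h𝓧sub : IsSubcat 𝓧) (h𝓧tt : 𝓧 ⊆ twoTerm 𝓡) :
    IsTwoTermRelCT 𝓡 𝓧 ↔ ContravariantlyFinite 𝓧 ∧ IsTwoTermMaxRelRigid 𝓡 𝓧 := by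
  constructor
  · rintro ⟨htt, hcf, hct⟩
    refine ⟨hcf, htt, fun X hX => ((hct X).1 hX).2.1, fun M hM hrig => ?_⟩
    have hMv : M ∈ veeAdd 𝓧 M := fun T hT => hT.2.2
    have hXv : 𝓧 ⊆ veeAdd 𝓧 M := fun A hA T hT => hT.2.1 hA
    exact (hct M).2 ⟨hM, fun X hX => hrig M hMv X (hXv hX), fun X hX => hrig X (hXv hX) M hMv⟩
  · rintro ⟨hcf, hmax⟩
    refine ⟨h𝓧tt, hcf, fun M => ⟨fun hM => ⟨h𝓧tt hM, hmax.2.1 M hM,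
      fun X hX => hmax.2.1 X hX M hM⟩, ?_⟩⟩
    rintro ⟨hMtt, hM1, hM2⟩
    refine hmax.2.2 M hMtt (isRelRigid_veeAdd hmax.2.1 hM1 hM2 ?_)
    rintro φ ⟨R, hR, a, b, rfl⟩
    obtain ⟨X, hX, u, hu⟩ := exists_good h𝓡sub h𝓡 hcf hmax hR hM1
    obtain ⟨m, rfl⟩ := hu a
    rw [Category.assoc, hM2 X hX (u ≫ b) ⟨R, hR, u, b, rfl⟩, comp_zero]
end

section
/- Let R be a rigid subcategory of C and X a two-term maximal R[1]-rigid subcategory of C. If X is covariantly finite in C or contravariantly finite in C, then R ⊆ X[-1]∗X, i.e. every object of R admits a triangle X[-1] → R → X' → X with X, X' ∈ X. -/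
/-!
Setting: `C` is a Hom-finite Krull–Schmidt `k`-linear triangulated category over an
algebraically closed field `k` (Krull–Schmidt is encoded as Hom-finiteness together with
idempotent completeness). Subcategories are identified with their classes of objects and
are always assumed full, closed under isomorphisms, direct sums and direct summands.
-/

open CategoryTheory CategoryTheory.Limits CategoryTheory.Pretriangulated Opposite

universe v u

variable {C : Type u} [Category.{v} C] [Preadditive C] [HasZeroObject C] [HasShift C ℤ]
  [∀ n : ℤ, (shiftFunctor C n).Additive] [Pretriangulated C]

/-- A non-nilpotent element of a finite-dimensional algebra has a multiple which is a
nonzero idempotent. -/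
lemma aux_exists_idem {k A : Type*} [Field k] [Ring A] [Algebra k A] [FiniteDimensional k A]
    (h : A) (hn : ¬ IsNilpotent h) : ∃ c : A, c * h = h * c ∧ (h * c) * (h * c) = h * c ∧
      h * c ≠ 0 := by
  have h_int : IsIntegral k h := IsIntegral.of_finite k h
  have hμ : minpoly k h ≠ 0 := minpoly.ne_zero h_int
  obtain ⟨q, hq1, hq2⟩ := Polynomial.exists_eq_pow_rootMultiplicity_mul_and_not_dvd
    (minpoly k h) hμ 0
  set n := (minpoly k h).rootMultiplicity 0
  simp only [map_zero, sub_zero] at hq1 hq2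
  have hcop : IsCoprime ((Polynomial.X : Polynomial k) ^ (n + 1)) q :=
    IsCoprime.pow_left ((Polynomial.irreducible_X.coprime_iff_not_dvd).2 hq2)
  obtain ⟨a, b, hab⟩ := hcop
  have hz : Polynomial.aeval h (Polynomial.X ^ (n + 1) * q) = 0 := by
    rw [pow_succ', mul_assoc, ← hq1, map_mul, minpoly.aeval, mul_zero]
  have key : Polynomial.aeval h (Polynomial.X * (Polynomial.X ^ n * a)) =
      h * Polynomial.aeval h (Polynomial.X ^ n * a) := by simp
  refine ⟨Polynomial.aeval h (Polynomial.X ^ n * a), ?_, ?_, ?_⟩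
  · rw [← key, mul_comm Polynomial.X, map_mul _ (_ * _) Polynomial.X, Polynomial.aeval_X]
  · rw [← key, ← map_mul, ← sub_eq_zero, ← map_sub]
    have : Polynomial.X * (Polynomial.X ^ n * a) * (Polynomial.X * (Polynomial.X ^ n * a)) -
      Polynomial.X * (Polynomial.X ^ n * a) = - (a * b) * (Polynomial.X ^ (n + 1) * q) := by
      linear_combination (Polynomial.X ^ (n + 1) * a) * hab
    rw [this, map_mul, hz, mul_zero]
  · rw [← key]
    intro h0
    apply hn
    refine ⟨n + 1, ?_⟩
    have h1 : Polynomial.aeval h ((Polynomial.X : Polynomial k) ^ (n + 1)) =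
        Polynomial.aeval h (Polynomial.X ^ (n + 1) *
          (Polynomial.X * (Polynomial.X ^ n * a)) + b * (Polynomial.X ^ (n + 1) * q)) := by
      congr 1
      linear_combination - (Polynomial.X ^ (n + 1)) * hab
    rw [map_add, map_mul, h0, map_mul, hz] at h1
    simpa using h1

/-- A sequence `V ⟶ R ⟶ Z ⟶ W ⟶ S` behaving like a piece of a triangle. -/
structure AuxExact {D : Type*} [Category D] [Preadditive D] {V R Z W S : D}
    (w' : V ⟶ R) (i : R ⟶ Z) (p : Z ⟶ W) (w : W ⟶ S) : Prop where
  z1 : w' ≫ i = 0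
  z2 : i ≫ p = 0
  z3 : p ≫ w = 0
  e1 : ∀ (T : D) (y : T ⟶ R), y ≫ i = 0 → ∃ v : T ⟶ V, y = v ≫ w'
  e2 : ∀ (T : D) (z : T ⟶ Z), z ≫ p = 0 → ∃ v : T ⟶ R, z = v ≫ i
  e3 : ∀ (T : D) (x : T ⟶ W), x ≫ w = 0 → ∃ v : T ⟶ Z, x = v ≫ p
  c1 : ∀ (T : D) (m : R ⟶ T), w' ≫ m = 0 → ∃ n : Z ⟶ T, m = i ≫ n

/-- Splitting off a summand. -/
lemma aux_reduce {D : Type*} [Category D] [Preadditive D] [IsIdempotentComplete D]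
    {V R Z W S : D}
    {w' : V ⟶ R} {i : R ⟶ Z} {p : Z ⟶ W} {w : W ⟶ S} (E : AuxExact w' i p w)
    {Z₁ R₂ : D} (g : Z₁ ⟶ R) (q : R ⟶ Z₁) (hgq : g ≫ q = 𝟙 Z₁) (hw : w' ≫ q = 0)
    (j : R₂ ⟶ R) (t : R ⟶ R₂) (hjt : j ≫ t = 𝟙 _) (htj : t ≫ j = 𝟙 _ - q ≫ g) :
    ∃ (Z₂ : D) (i₂ : R₂ ⟶ Z₂) (p₂ : Z₂ ⟶ W) (s : Z₁ ⟶ Z) (r : Z ⟶ Z₁) (s₂ : Z₂ ⟶ Z)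
      (r₂ : Z ⟶ Z₂), AuxExact (w' ≫ t) i₂ p₂ w ∧ s ≫ r = 𝟙 _ ∧ s₂ ≫ r₂ = 𝟙 _ ∧
        s ≫ r₂ = 0 ∧ s₂ ≫ r = 0 ∧ r ≫ s + r₂ ≫ s₂ = 𝟙 _ := by
  obtain ⟨r, hr⟩ := E.c1 _ q hw
  set s := g ≫ i with hs
  have hsr : s ≫ r = 𝟙 _ := by rw [hs, Category.assoc, ← hr, hgq]
  obtain ⟨Z₂, s₂, r₂, h1, h2⟩ := IsIdempotentComplete.idempotents_split Z (𝟙 _ - r ≫ s) (by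
    apply Idempotents.idem_of_id_sub_idem
    rw [Category.assoc, reassoc_of% hsr])
  have hsr₂ : s ≫ r₂ = 0 := by
    have : s ≫ r₂ ≫ s₂ = 0 := by rw [h2]; simp [reassoc_of% hsr]
    have h3 := this =≫ r₂
    simpa [h1] using h3
  have hs₂r : s₂ ≫ r = 0 := by
    have : r₂ ≫ s₂ ≫ r = 0 := by rw [reassoc_of% h2]; simp [hsr]
    have h3 := s₂ ≫= this
    simpa [reassoc_of% h1] using h3
  have hjq : j ≫ q = 0 := by
    have : t ≫ j ≫ q = 0 := by rw [reassoc_of% htj]; simp [hgq]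
    have h3 := j ≫= this
    simpa [reassoc_of% hjt] using h3
  have hsum : r ≫ s + r₂ ≫ s₂ = 𝟙 _ := by rw [h2]; abel
  have hsp : s ≫ p = 0 := by rw [hs, Category.assoc, E.z2, comp_zero]
  refine ⟨Z₂, j ≫ i ≫ r₂, s₂ ≫ p, s, r, s₂, r₂, ?_, hsr, h1, hsr₂, hs₂r, hsum⟩
  constructor
  · have : w' ≫ (t ≫ j) ≫ i ≫ r₂ = 0 := by
      rw [htj]; simp [reassoc_of% E.z1, reassoc_of% hw]
    simpa using this
  · have : j ≫ i ≫ (r₂ ≫ s₂) ≫ p = 0 := by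
      rw [h2]; simp [E.z2, hsp]
    simpa using this
  · rw [Category.assoc, E.z3, comp_zero]
  · intro T y hy
    have h3 : y ≫ j ≫ i = 0 := by
      have h4 : (y ≫ j ≫ i) ≫ (r ≫ s + r₂ ≫ s₂) = 0 := by
        rw [Preadditive.comp_add]
        have h5 : (y ≫ j ≫ i) ≫ r ≫ s = 0 := by
          simp only [Category.assoc]
          rw [← reassoc_of% hr, reassoc_of% hjq]; simp
        have h6 : (y ≫ j ≫ i) ≫ r₂ ≫ s₂ = 0 := by
          have := hy =≫ s₂
          simpa using this
        rw [h5, h6, add_zero]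
      rwa [hsum, Category.comp_id] at h4
    obtain ⟨v, hv⟩ := E.e1 T (y ≫ j) (by simpa using h3)
    refine ⟨v, ?_⟩
    have := hv =≫ t
    simpa [hjt] using this
  · intro T z hz
    obtain ⟨y, hy⟩ := E.e2 T (z ≫ s₂) (by simpa using hz)
    refine ⟨y ≫ t, ?_⟩
    have h3 : z = y ≫ i ≫ r₂ := by
      have := hy =≫ r₂
      simpa [h1] using this
    have h4 : y ≫ (t ≫ j) ≫ i ≫ r₂ = y ≫ i ≫ r₂ := by
      rw [htj]
      have : g ≫ i ≫ r₂ = 0 := by rw [← Category.assoc, ← hs, hsr₂]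
      simp [this]
    rw [h3, ← h4]; simp
  · intro T x hx
    obtain ⟨z, hz⟩ := E.e3 T x hx
    refine ⟨z ≫ r₂, ?_⟩
    have h3 : z ≫ (r₂ ≫ s₂) ≫ p = z ≫ p := by rw [h2]; simp [hsp]
    rw [hz, ← h3]; simp
  · intro T m hm
    obtain ⟨n, hn⟩ := E.c1 T (t ≫ m) (by simpa using hm)
    refine ⟨s₂ ≫ n, ?_⟩
    have h3 : m = j ≫ i ≫ n := by rw [← hn, reassoc_of% hjt]
    have h4 : j ≫ i ≫ (r₂ ≫ s₂) ≫ n = j ≫ i ≫ n := by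
      rw [h2]
      simp [← reassoc_of% hr, reassoc_of% hjq]
    rw [h3, ← h4]; simp

lemma aux_finrank {k V₁ V₂ V₂' V₃ : Type*} [Field k] [AddCommGroup V₁] [AddCommGroup V₂]
    [AddCommGroup V₂'] [AddCommGroup V₃] [Module k V₁] [Module k V₂] [Module k V₂'] [Module k V₃]
    [FiniteDimensional k V₁] [FiniteDimensional k V₂] [FiniteDimensional k V₂']
    (α : V₁ →ₗ[k] V₂) (β : V₂ →ₗ[k] V₃) (α' : V₁ →ₗ[k] V₂') (β' : V₂' →ₗ[k] V₃)
    (h : LinearMap.range α = LinearMap.ker β) (h' : LinearMap.range α' = LinearMap.ker β')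
    (hk : LinearMap.ker α = LinearMap.ker α') (hr : LinearMap.range β = LinearMap.range β') :
    Module.finrank k V₂ = Module.finrank k V₂' := by
  have h1 := LinearMap.finrank_range_add_finrank_ker β
  have h2 := LinearMap.finrank_range_add_finrank_ker β'
  have h3 := LinearMap.finrank_range_add_finrank_ker α
  have h4 := LinearMap.finrank_range_add_finrank_ker α'
  rw [← h] at h1
  rw [← h'] at h2
  rw [hk] at h3
  rw [hr] at h1
  omega

lemma AuxExact.finrank_eq (k : Type*) [Field k] {D : Type*} [Category D] [Preadditive D]
    [Linear k D] [∀ X Y : D, FiniteDimensional k (X ⟶ Y)] {V R Z Z' W S : D}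
    {w' : V ⟶ R} {i : R ⟶ Z} {p : Z ⟶ W} {w : W ⟶ S} (E : AuxExact w' i p w)
    {i' : R ⟶ Z'} {p' : Z' ⟶ W} (E' : AuxExact w' i' p' w) (T : D) :
    Module.finrank k (T ⟶ Z) = Module.finrank k (T ⟶ Z') := by
  refine aux_finrank (Linear.rightComp k T i) (Linear.rightComp k T p)
    (Linear.rightComp k T i') (Linear.rightComp k T p') ?_ ?_ ?_ ?_
  · ext x
    simp only [LinearMap.mem_range, LinearMap.mem_ker, Linear.rightComp_apply]
    constructor
    · rintro ⟨y, rfl⟩; simp [E.z2]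
    · intro hx; obtain ⟨v, hv⟩ := E.e2 T x hx; exact ⟨v, hv.symm⟩
  · ext x
    simp only [LinearMap.mem_range, LinearMap.mem_ker, Linear.rightComp_apply]
    constructor
    · rintro ⟨y, rfl⟩; simp [E'.z2]
    · intro hx; obtain ⟨v, hv⟩ := E'.e2 T x hx; exact ⟨v, hv.symm⟩
  · ext x
    simp only [LinearMap.mem_ker, Linear.rightComp_apply]
    constructor
    · intro hx; obtain ⟨v, rfl⟩ := E.e1 T x hx; simp [E'.z1]
    · intro hx; obtain ⟨v, rfl⟩ := E'.e1 T x hx; simp [E.z1]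
  · ext x
    simp only [LinearMap.mem_range, Linear.rightComp_apply]
    constructor
    · rintro ⟨y, rfl⟩
      obtain ⟨v, hv⟩ := E'.e3 T (y ≫ p) (by simp [E.z3]); exact ⟨v, hv.symm⟩
    · rintro ⟨y, rfl⟩
      obtain ⟨v, hv⟩ := E.e3 T (y ≫ p') (by simp [E'.z3]); exact ⟨v, hv.symm⟩

/-- The middle term of an exact sequence is determined by the outer maps. -/
lemma aux_unique (k : Type*) [Field k] {D : Type*} [Category D] [Preadditive D]
    [Linear k D] [∀ X Y : D, FiniteDimensional k (X ⟶ Y)] [IsIdempotentComplete D] (n : ℕ) :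
    ∀ {V R Z Z' W S : D} {w' : V ⟶ R} {i : R ⟶ Z} {p : Z ⟶ W} {w : W ⟶ S}
    (_ : AuxExact w' i p w) {i' : R ⟶ Z'} {p' : Z' ⟶ W} (_ : AuxExact w' i' p' w),
    Module.finrank k (R ⟶ R) = n → Nonempty (Z ≅ Z') := by
  induction n using Nat.strong_induction_on with
  | _ n ih =>
  intro V R Z Z' W S w' i p w E i' p' E' hn
  obtain ⟨u, hu⟩ := E.e3 Z' p' E'.z3
  obtain ⟨u', hu'⟩ := E'.e3 Z p E.z3
  have hf : (u' ≫ u) ≫ p = p := by rw [Category.assoc, ← hu, ← hu']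
  let h : End Z := 𝟙 Z - u' ≫ u
  have hh : (𝟙 Z - u' ≫ u) ≫ p = 0 := by rw [Preadditive.sub_comp, hf, Category.id_comp, sub_self]
  have : FiniteDimensional k (End Z) := inferInstanceAs (FiniteDimensional k (Z ⟶ Z))
  by_cases hnil : IsNilpotent h
  · have hunit := hnil.isUnit_one_sub
    have hiso : IsIso (u' ≫ u) := by
      have h1 : (1 - h : End Z) = u' ≫ u := by
        change 𝟙 Z - (𝟙 Z - u' ≫ u) = _
        abel
      rw [h1] at hunit
      exact (isUnit_iff_isIso _).1 hunit
    have hσ : (inv (u' ≫ u) ≫ u') ≫ u = 𝟙 _ := by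
      rw [Category.assoc, IsIso.inv_hom_id]
    set σ := inv (u' ≫ u) ≫ u'
    have hsurj : Function.Surjective (Linear.rightComp k Z' u) := by
      intro x
      exact ⟨x ≫ σ, by simp [hσ]⟩
    have hinj := (LinearMap.injective_iff_surjective_of_finrank_eq_finrank
      (E'.finrank_eq k E Z')).2 hsurj
    have h2 : u ≫ σ = 𝟙 _ := by
      apply hinj
      simp [hσ]
    exact ⟨⟨σ, u, hσ, h2⟩⟩
  · obtain ⟨c, hc1, hc2, hc3⟩ := aux_exists_idem (k := k) h hnil
    let e : Z ⟶ Z := c ≫ (𝟙 Z - u' ≫ u)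
    have he : e ≫ e = e := hc2
    have he0 : e ≠ 0 := hc3
    have hep : e ≫ p = 0 := by simp only [e]; rw [Category.assoc, hh, comp_zero]
    obtain ⟨Z₁, s, r, hsr, hrs⟩ := IsIdempotentComplete.idempotents_split Z e he
    have hsp : s ≫ p = 0 := by
      have : s ≫ (r ≫ s) ≫ p = 0 := by rw [hrs, hep, comp_zero]
      simpa [reassoc_of% hsr] using this
    obtain ⟨g, hg⟩ := E.e2 _ s hsp
    have hgq : g ≫ i ≫ r = 𝟙 _ := by rw [← Category.assoc, ← hg, hsr]
    set q := i ≫ r with hq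
    have hwq : w' ≫ q = 0 := by rw [hq, reassoc_of% E.z1, zero_comp]
    obtain ⟨R₂, j, t, hjt, htj⟩ := IsIdempotentComplete.idempotents_split R (𝟙 _ - q ≫ g) (by
      apply Idempotents.idem_of_id_sub_idem
      rw [Category.assoc, reassoc_of% hgq])
    have hgt : g ≫ t = 0 := by
      have : g ≫ t ≫ j = 0 := by rw [htj]; simp [reassoc_of% hgq]
      have h3 := this =≫ t
      simpa [hjt] using h3
    have hlt : Module.finrank k (R₂ ⟶ R₂) < n := by
      rw [← hn]
      let φ : (R₂ ⟶ R₂) →ₗ[k] (R ⟶ R) := (Linear.leftComp k R t).comp (Linear.rightComp k R₂ j)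
      have hφ : ∀ x, φ x = t ≫ x ≫ j := fun x => rfl
      have hinj : Function.Injective φ := by
        intro x y hxy
        rw [hφ, hφ] at hxy
        have h3 := j ≫= hxy =≫ t
        simpa [reassoc_of% hjt, hjt] using h3
      have hle := LinearMap.finrank_le_finrank_of_injective hinj
      refine lt_of_le_of_ne hle fun heq => ?_
      obtain ⟨x, hx⟩ := (LinearMap.injective_iff_surjective_of_finrank_eq_finrank heq).1 hinj (𝟙 R)
      rw [hφ] at hx
      have h3 := g ≫= hx
      rw [reassoc_of% hgt, zero_comp, Category.comp_id] at h3
      apply he0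
      rw [← hrs, hg, ← h3, zero_comp, comp_zero]
    obtain ⟨Z₂, i₂, p₂, s, r, s₂, r₂, F, a1, a2, a3, a4, a5⟩ :=
      aux_reduce E g q hgq hwq j t hjt htj
    obtain ⟨Z₂', i₂', p₂', s', r', s₂', r₂', F', b1, b2, b3, b4, b5⟩ :=
      aux_reduce E' g q hgq hwq j t hjt htj
    obtain ⟨θ⟩ := ih _ hlt F F' rfl
    refine ⟨⟨r ≫ s' + r₂ ≫ θ.hom ≫ s₂', r' ≫ s + r₂' ≫ θ.inv ≫ s₂, ?_, ?_⟩⟩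
    · simp [reassoc_of% b1, reassoc_of% b2, reassoc_of% b3, reassoc_of% b4, a5]
    · simp [reassoc_of% a1, reassoc_of% a2, reassoc_of% a3, reassoc_of% a4, b5]

section AuxTriangles

variable {A B D : C} {f : A ⟶ B} {g : B ⟶ D} {h : D ⟶ A⟦(1:ℤ)⟧}

lemma aux_z12 (H : Triangle.mk f g h ∈ distTriang C) : f ≫ g = 0 :=
  comp_distTriang_mor_zero₁₂ _ H

lemma aux_z23 (H : Triangle.mk f g h ∈ distTriang C) : g ≫ h = 0 :=
  comp_distTriang_mor_zero₂₃ _ H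

lemma aux_z31 (H : Triangle.mk f g h ∈ distTriang C) : h ≫ f⟦(1:ℤ)⟧' = 0 :=
  comp_distTriang_mor_zero₃₁ _ H

lemma aux_y2 (H : Triangle.mk f g h ∈ distTriang C) {T : C} (x : B ⟶ T) (hx : f ≫ x = 0) :
    ∃ y : D ⟶ T, x = g ≫ y := Triangle.yoneda_exact₂ _ H x hx

lemma aux_y3 (H : Triangle.mk f g h ∈ distTriang C) {T : C} (x : D ⟶ T) (hx : g ≫ x = 0) :
    ∃ y : A⟦(1:ℤ)⟧ ⟶ T, x = h ≫ y := Triangle.yoneda_exact₃ _ H x hx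

lemma aux_c2 (H : Triangle.mk f g h ∈ distTriang C) {T : C} (x : T ⟶ B) (hx : x ≫ g = 0) :
    ∃ y : T ⟶ A, x = y ≫ f := Triangle.coyoneda_exact₂ _ H x hx

lemma aux_c3 (H : Triangle.mk f g h ∈ distTriang C) {T : C} (x : T ⟶ D) (hx : x ≫ h = 0) :
    ∃ y : T ⟶ B, x = y ≫ g := Triangle.coyoneda_exact₃ _ H x hx

lemma aux_c1 (H : Triangle.mk f g h ∈ distTriang C) {T : C} (x : T ⟶ A⟦(1:ℤ)⟧)
    (hx : x ≫ f⟦(1:ℤ)⟧' = 0) :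
    ∃ y : T ⟶ D, x = y ≫ h := Triangle.coyoneda_exact₁ _ H x hx

lemma aux_rot (H : Triangle.mk f g h ∈ distTriang C) :
    Triangle.mk g h (-f⟦(1:ℤ)⟧') ∈ distTriang C := rot_of_distTriang _ H

/-- exactness at `B[1]`, from the left. -/
lemma aux_c4 (H : Triangle.mk f g h ∈ distTriang C) {T : C} (x : T ⟶ B⟦(1:ℤ)⟧)
    (hx : x ≫ g⟦(1:ℤ)⟧' = 0) :
    ∃ y : T ⟶ A⟦(1:ℤ)⟧, x = y ≫ f⟦(1:ℤ)⟧' := by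
  obtain ⟨y, hy⟩ := aux_c1 (aux_rot H) x hx
  exact ⟨-y, by rw [hy]; simp⟩

lemma aux_exact_of_dist (H : Triangle.mk f g h ∈ distTriang C) :
    AuxExact f g h (f⟦(1:ℤ)⟧') where
  z1 := aux_z12 H
  z2 := aux_z23 H
  z3 := aux_z31 H
  e1 _ y hy := aux_c2 H y hy
  e2 _ y hy := aux_c3 H y hy
  e3 _ y hy := aux_c1 H y hy
  c1 _ m hm := aux_y2 H m hm

lemma aux_tr3 {A' B' D' : C} {f' : A' ⟶ B'} {g' : B' ⟶ D'} {h' : D' ⟶ A'⟦(1:ℤ)⟧}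
    (H : Triangle.mk f g h ∈ distTriang C) (H' : Triangle.mk f' g' h' ∈ distTriang C)
    (a : A ⟶ A') (b : B ⟶ B') (comm : f ≫ b = a ≫ f') :
    ∃ c : D ⟶ D', g ≫ c = b ≫ g' ∧ h ≫ a⟦(1:ℤ)⟧' = c ≫ h' :=
  complete_distinguished_triangle_morphism _ _ H H' a b comm

lemma aux_iso {A' B' D' : C} {f' : A' ⟶ B'} {g' : B' ⟶ D'} {h' : D' ⟶ A'⟦(1:ℤ)⟧}
    (H : Triangle.mk f g h ∈ distTriang C) (α : A' ≅ A) (β : B' ≅ B) (γ : D' ≅ D)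
    (h₁ : f' ≫ β.hom = α.hom ≫ f) (h₂ : g' ≫ γ.hom = β.hom ≫ g)
    (h₃ : h' ≫ α.hom⟦(1:ℤ)⟧' = γ.hom ≫ h) : Triangle.mk f' g' h' ∈ distTriang C :=
  isomorphic_distinguished _ H _ (Triangle.isoMk _ _ α β γ h₁ h₂ h₃)

end AuxTriangles

/-- Weak form of the octahedral property, first version. -/
lemma aux_P {A R₁ R₀ R : C} {d : A ⟶ R₁} {a : R₁ ⟶ R₀} {π : R₀ ⟶ A⟦(1:ℤ)⟧}
    (H : Triangle.mk d a π ∈ distTriang C) (e : R₁ ⟶ R) :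
    ∃ (Z' : C) (c : R₀ ⊞ R ⟶ Z') (δ : Z' ⟶ R₁⟦(1:ℤ)⟧) (i' : R ⟶ Z') (p' : Z' ⟶ A⟦(1:ℤ)⟧),
      Triangle.mk (biprod.lift a e) c δ ∈ distTriang C ∧
        AuxExact (d ≫ e) i' p' ((d ≫ e)⟦(1:ℤ)⟧') := by
  obtain ⟨Z', c, δ, H'⟩ := distinguished_cocone_triangle (biprod.lift a e)
  have Hr := aux_rot H
  obtain ⟨p', hp1, hp2⟩ := aux_tr3 H' Hr (𝟙 R₁) biprod.fst
    (by simp)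
  replace hp1 : c ≫ p' = biprod.fst ≫ π := hp1
  replace hp2 : δ = - (p' ≫ d⟦(1:ℤ)⟧') := by simpa using hp2
  have hlift : biprod.lift a e = a ≫ biprod.inl + e ≫ biprod.inr := by
    ext <;> simp
  have hlc := aux_z12 H'
  have hda := aux_z12 H
  have hδl := aux_z31 H'
  refine ⟨Z', c, δ, biprod.inr ≫ c, p', H', ?_⟩
  constructor
  · have : d ≫ biprod.lift a e ≫ c = 0 := by rw [hlc, comp_zero]
    rw [hlift] at this
    simpa [reassoc_of% hda] using this
  · simp [hp1]
  · have h1 : δ ≫ (biprod.lift a e)⟦(1:ℤ)⟧' ≫ (biprod.snd)⟦(1:ℤ)⟧' = 0 := by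
      rw [reassoc_of% hδl, zero_comp]
    rw [← Functor.map_comp, biprod.lift_snd, hp2] at h1
    rw [Functor.map_comp]
    simpa using h1
  · intro T y hy
    obtain ⟨s, hs⟩ := aux_c2 H' (y ≫ biprod.inr) (by simpa using hy)
    have h1 : s ≫ a = 0 := by simpa using (hs =≫ biprod.fst).symm
    have h2 : y = s ≫ e := by simpa using (hs =≫ biprod.snd)
    obtain ⟨v, rfl⟩ := aux_c2 H s h1
    exact ⟨v, by simpa using h2⟩
  · intro T z hz
    obtain ⟨y, rfl⟩ := aux_c3 H' z (by rw [hp2]; simp [reassoc_of% hz])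
    have h1 : (y ≫ biprod.fst) ≫ π = 0 := by simpa [hp1] using hz
    obtain ⟨s, hs⟩ := aux_c3 H (y ≫ biprod.fst) h1
    refine ⟨y ≫ biprod.snd - s ≫ e, ?_⟩
    have h2 : y - s ≫ biprod.lift a e = (y ≫ biprod.snd - s ≫ e) ≫ biprod.inr := by
      ext
      · simp [hs]
      · simp
    rw [← Category.assoc, ← h2, Preadditive.sub_comp, Category.assoc, hlc, comp_zero, sub_zero]
  · intro T x hx
    rw [Functor.map_comp] at hx
    have h1 : x ≫ d⟦(1:ℤ)⟧' ≫ a⟦(1:ℤ)⟧' = 0 := by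
      rw [← Functor.map_comp, hda, Functor.map_zero, comp_zero]
    obtain ⟨z, hz⟩ := aux_c1 H' (x ≫ d⟦(1:ℤ)⟧') (by
      rw [hlift, Functor.map_add, Functor.map_comp, Functor.map_comp, Preadditive.comp_add]
      simp only [Category.assoc]
      rw [reassoc_of% h1, reassoc_of% hx]; simp)
    obtain ⟨m, hm⟩ := aux_c3 Hr (x + z ≫ p') (by
      rw [hp2] at hz
      simp only [Preadditive.add_comp, Preadditive.comp_neg, Category.assoc]
      rw [hz]; simp)
    refine ⟨m ≫ biprod.inl ≫ c - z, ?_⟩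
    rw [Preadditive.sub_comp, Category.assoc, Category.assoc, hp1, biprod.inl_fst_assoc, ← hm]
    abel
  · intro T m hm
    have hm' : d ≫ (e ≫ m) = 0 := by simpa using hm
    obtain ⟨n, hn⟩ := aux_y2 H (e ≫ m) hm'
    obtain ⟨y, hy⟩ := aux_y2 H' (biprod.desc (-n) m) (by simp [hn])
    refine ⟨y, ?_⟩
    rw [Category.assoc, ← hy, biprod.inr_desc]

/-- Weak form of the octahedral property, second version. -/
lemma aux_Q {X R₁ R₀ R : C} {a : R₁ ⟶ R₀} {π : R₀ ⟶ X} {d : X ⟶ R₁⟦(1:ℤ)⟧}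
    (H : Triangle.mk a π d ∈ distTriang C) (b : R ⟶ R₀) :
    ∃ (Y' : C) (c : R₀ ⟶ Y') (δ : Y' ⟶ (R₁ ⊞ R)⟦(1:ℤ)⟧) (g' : X ⟶ Y') (h' : Y' ⟶ R⟦(1:ℤ)⟧),
      Triangle.mk (biprod.desc a b) c δ ∈ distTriang C ∧
        AuxExact (b ≫ π) g' h' ((b ≫ π)⟦(1:ℤ)⟧') := by
  obtain ⟨Y', c, δ, H'⟩ := distinguished_cocone_triangle (biprod.desc a b)
  obtain ⟨g', hg1, hg2⟩ := aux_tr3 H H' biprod.inl (𝟙 R₀)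
    (by simp)
  replace hg1 : π ≫ g' = c := by simpa using hg1
  replace hg2 : d ≫ (biprod.inl)⟦(1:ℤ)⟧' = g' ≫ δ := hg2
  have hdesc : biprod.desc a b = biprod.fst ≫ a + biprod.snd ≫ b := by
    ext <;> simp
  have hlc := aux_z12 H'
  have haπ := aux_z12 H
  have hδl := aux_z31 H'
  rw [hdesc, Functor.map_add, Functor.map_comp, Functor.map_comp, Preadditive.comp_add] at hδl
  have k1 : (biprod.inl : R₁ ⟶ R₁ ⊞ R)⟦(1:ℤ)⟧' ≫ (biprod.fst : R₁ ⊞ R ⟶ R₁)⟦(1:ℤ)⟧' = 𝟙 _ := by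
    rw [← Functor.map_comp, biprod.inl_fst, CategoryTheory.Functor.map_id]
  have k2 : (biprod.inl : R₁ ⟶ R₁ ⊞ R)⟦(1:ℤ)⟧' ≫ (biprod.snd : R₁ ⊞ R ⟶ R)⟦(1:ℤ)⟧' = 0 := by
    rw [← Functor.map_comp, biprod.inl_snd, Functor.map_zero]
  have k3 : (biprod.inr : R ⟶ R₁ ⊞ R)⟦(1:ℤ)⟧' ≫ (biprod.snd : R₁ ⊞ R ⟶ R)⟦(1:ℤ)⟧' = 𝟙 _ := by
    rw [← Functor.map_comp, biprod.inr_snd, CategoryTheory.Functor.map_id]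
  have k4 : (biprod.fst : R₁ ⊞ R ⟶ R₁)⟦(1:ℤ)⟧' ≫ (biprod.inl : R₁ ⟶ R₁ ⊞ R)⟦(1:ℤ)⟧' +
      (biprod.snd : R₁ ⊞ R ⟶ R)⟦(1:ℤ)⟧' ≫ (biprod.inr : R ⟶ R₁ ⊞ R)⟦(1:ℤ)⟧' = 𝟙 _ := by
    rw [← Functor.map_comp, ← Functor.map_comp, ← Functor.map_add, biprod.total, CategoryTheory.Functor.map_id]
  refine ⟨Y', c, δ, g', δ ≫ (biprod.snd)⟦(1:ℤ)⟧', H', ?_⟩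
  constructor
  · have : biprod.inr ≫ biprod.desc a b ≫ c = 0 := by rw [hlc, comp_zero]
    rw [Category.assoc, hg1]
    simpa using this
  · rw [← reassoc_of% hg2, k2, comp_zero]
  · have h1 := hδl =≫ π⟦(1:ℤ)⟧'
    have h2 : a⟦(1:ℤ)⟧' ≫ π⟦(1:ℤ)⟧' = 0 := by
      rw [← Functor.map_comp, haπ, Functor.map_zero]
    simp only [Preadditive.add_comp, Category.assoc, h2, comp_zero, zero_comp, zero_add] at h1
    simpa using h1
  · intro T x hx
    have h1 : x ≫ d = 0 := by
      have h2 : x ≫ d ≫ (biprod.inl : R₁ ⟶ R₁ ⊞ R)⟦(1:ℤ)⟧' = 0 := by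
        rw [hg2, reassoc_of% hx, zero_comp]
      have h3 := h2 =≫ (biprod.fst : R₁ ⊞ R ⟶ R₁)⟦(1:ℤ)⟧'
      simpa only [Category.assoc, k1, Category.comp_id, zero_comp] using h3
    obtain ⟨y, rfl⟩ := aux_c3 H x h1
    obtain ⟨s, rfl⟩ := aux_c2 H' y (by rw [← hg1]; simpa using hx)
    refine ⟨s ≫ biprod.snd, ?_⟩
    rw [hdesc]
    simp [haπ]
  · intro T z hz
    have hz' : z ≫ δ ≫ (biprod.snd : R₁ ⊞ R ⟶ R)⟦(1:ℤ)⟧' = 0 := hz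
    obtain ⟨x, hx⟩ := aux_c1 H (z ≫ δ ≫ (biprod.fst : R₁ ⊞ R ⟶ R₁)⟦(1:ℤ)⟧') (by
      have h1 := z ≫= hδl
      rw [Preadditive.comp_add, reassoc_of% hz'] at h1
      simpa using h1)
    obtain ⟨y, hy⟩ := aux_c3 H' (z - x ≫ g') (by
      rw [Preadditive.sub_comp, Category.assoc, ← hg2, ← reassoc_of% hx]
      have h1 := (z ≫ δ) ≫= k4
      rw [Preadditive.comp_add] at h1
      simp only [Category.assoc] at h1
      rw [reassoc_of% hz', zero_comp, add_zero, Category.comp_id] at h1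
      rw [h1, sub_self])
    refine ⟨y ≫ π + x, ?_⟩
    rw [Preadditive.add_comp, Category.assoc, hg1, ← hy]
    abel
  · intro T y hy
    rw [Functor.map_comp] at hy
    obtain ⟨n, hn⟩ := aux_c4 H (y ≫ b⟦(1:ℤ)⟧') (by simpa using hy)
    obtain ⟨z, hz⟩ := aux_c1 H' (y ≫ (biprod.inr : R ⟶ R₁ ⊞ R)⟦(1:ℤ)⟧' -
        n ≫ (biprod.inl : R₁ ⟶ R₁ ⊞ R)⟦(1:ℤ)⟧') (by
      rw [Preadditive.sub_comp, Category.assoc, Category.assoc, ← Functor.map_comp,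
        ← Functor.map_comp, biprod.inr_desc, biprod.inl_desc, hn, sub_self])
    refine ⟨z, ?_⟩
    rw [← Category.assoc, ← hz, Preadditive.sub_comp, Category.assoc, Category.assoc, k3, k2]
    simp
  · intro T x hx
    obtain ⟨y, hy⟩ := aux_y2 H' (π ≫ x) (by
      rw [hdesc]
      have hx' : b ≫ π ≫ x = 0 := by simpa using hx
      simp [hx', reassoc_of% haπ])
    obtain ⟨z, hz⟩ := aux_y3 H (x - g' ≫ y) (by
      rw [Preadditive.comp_sub, hy, reassoc_of% hg1, sub_self])
    refine ⟨y + δ ≫ (biprod.fst : R₁ ⊞ R ⟶ R₁)⟦(1:ℤ)⟧' ≫ z, ?_⟩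
    rw [Preadditive.comp_add, ← reassoc_of% hg2, reassoc_of% k1, ← hz]
    abel

lemma aux_biprod_mem {𝓢 : Set C} (h : IsSubcat 𝓢) {F G : C} (hF : F ∈ 𝓢) (hG : G ∈ 𝓢) :
    (F ⊞ G : C) ∈ 𝓢 :=
  h.2.1 hF hG ⟨biprod.inl, biprod.inr, biprod.fst, biprod.snd, by simp, by simp, by simp,
    by simp, by simp⟩

lemma aux_twoTerm_mem {𝓡 : Set C} {R₁ R₀ Z Z' : C} (h₁ : R₁ ∈ 𝓡) (h₀ : R₀ ∈ 𝓡)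
    {a : R₁ ⟶ R₀} {π : R₀ ⟶ Z'} {d : Z' ⟶ R₁⟦(1:ℤ)⟧} (H : Triangle.mk a π d ∈ distTriang C)
    (θ : Z ≅ Z') : Z ∈ twoTerm 𝓡 := by
  refine ⟨R₀, h₀, R₁⟦(1:ℤ)⟧, ⟨R₁, h₁, ⟨Iso.refl _⟩⟩, π ≫ θ.inv, θ.hom ≫ d, -a⟦(1:ℤ)⟧', ?_⟩
  exact aux_iso (aux_rot H) (Iso.refl _) θ (Iso.refl _) (by simp) (by simp) (by simp)

lemma aux_twoTerm_tri {𝓡 : Set C} {X : C} (hX : X ∈ twoTerm 𝓡) :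
    ∃ R₁ ∈ 𝓡, ∃ R₀ ∈ 𝓡, ∃ (a : R₁ ⟶ R₀) (π : R₀ ⟶ X) (d : X ⟶ R₁⟦(1:ℤ)⟧),
      Triangle.mk a π d ∈ distTriang C := by
  obtain ⟨R₀, h₀, S, ⟨R₁, h₁, ⟨θ⟩⟩, f, g, h, H⟩ := hX
  refine ⟨R₁, h₁, R₀, h₀, -(shiftFunctor C (1:ℤ)).preimage (θ.inv ≫ h), f, g ≫ θ.hom, ?_⟩
  have key : Triangle.mk f (g ≫ θ.hom)
      (-(-(shiftFunctor C (1:ℤ)).preimage (θ.inv ≫ h))⟦(1:ℤ)⟧') ∈ distTriang C :=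
    aux_iso H (Iso.refl R₀) (Iso.refl X) θ.symm (by simp) (by simp) (by simp)
  exact (Pretriangulated.rotate_distinguished_triangle _).2 key

lemma aux_cocone_mem (k : Type*) [Field k] [Linear k C]
    [∀ X Y : C, FiniteDimensional k (X ⟶ Y)] [IsIdempotentComplete C]
    {𝓡 : Set C} (h𝓡sub : IsSubcat 𝓡) (h𝓡 : IsRigidSubcat 𝓡)
    {R X Y : C} (hR : R ∈ 𝓡) (hX : X ∈ twoTerm 𝓡) {f : R ⟶ X} {g : X ⟶ Y}
    {h : Y ⟶ R⟦(1:ℤ)⟧} (H : Triangle.mk f g h ∈ distTriang C) : Y ∈ twoTerm 𝓡 := by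
  obtain ⟨R₁, h₁, R₀, h₀, a, π, d, H₀⟩ := aux_twoTerm_tri hX
  obtain ⟨b, rfl⟩ := aux_c3 H₀ f (h𝓡 R hR R₁ h₁ _)
  obtain ⟨Y', c, δ, g', h', H', E'⟩ := aux_Q H₀ b
  obtain ⟨θ⟩ := aux_unique k _ (aux_exact_of_dist H) E' rfl
  exact aux_twoTerm_mem (aux_biprod_mem h𝓡sub h₁ hR) h₀ H' θ

lemma aux_inv_rot {A B D : C} {f : A ⟶ B} {g : B ⟶ D} {h : D ⟶ A⟦(1:ℤ)⟧}
    (H : Triangle.mk f g h ∈ distTriang C) :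
    ∃ (d : D⟦(-1:ℤ)⟧ ⟶ A) (g' : B ⟶ D⟦(-1:ℤ)⟧⟦(1:ℤ)⟧), Triangle.mk d f g' ∈ distTriang C :=
  ⟨_, _, inv_rot_of_distTriang _ H⟩

lemma aux_cone_mem (k : Type*) [Field k] [Linear k C]
    [∀ X Y : C, FiniteDimensional k (X ⟶ Y)] [IsIdempotentComplete C]
    {𝓡 : Set C} (h𝓡sub : IsSubcat 𝓡) (h𝓡 : IsRigidSubcat 𝓡)
    {R X Z : C} (hR : R ∈ 𝓡) (hX : X ∈ twoTerm 𝓡) {i : R ⟶ Z} {p : Z ⟶ X}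
    {w : X ⟶ R⟦(1:ℤ)⟧} (H : Triangle.mk i p w ∈ distTriang C) : Z ∈ twoTerm 𝓡 := by
  obtain ⟨R₁, h₁, R₀, h₀, a, π, d, H₀⟩ := aux_twoTerm_tri hX
  obtain ⟨f, p₁, HI⟩ := aux_inv_rot H
  obtain ⟨d', π', HI₀⟩ := aux_inv_rot H₀
  obtain ⟨y, hy⟩ := aux_y3 (aux_rot HI₀) (f⟦(1:ℤ)⟧') (h𝓡 R₀ h₀ R hR _)
  have hf : f = d' ≫ (-(shiftFunctor C (1:ℤ)).preimage y) := by
    apply (shiftFunctor C (1:ℤ)).map_injective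
    rw [hy]
    simp
  subst hf
  obtain ⟨Z', c, δ, i', p', H', E'⟩ := aux_P HI₀ (-(shiftFunctor C (1:ℤ)).preimage y)
  obtain ⟨θ⟩ := aux_unique k _ (aux_exact_of_dist HI) E' rfl
  have hmem := aux_twoTerm_mem h₁ (aux_biprod_mem h𝓡sub h₀ hR) H' θ
  exact hmem

/-- vanishing of `[𝓡[1]](A, B[1])`. -/
def AuxVan (𝓡 : Set C) (A B : C) : Prop := ∀ φ : A ⟶ B⟦(1:ℤ)⟧, InShiftIdeal 𝓡 φ → φ = 0

lemma aux_ideal_left {𝓡 : Set C} {A' A B : C} (x : A' ⟶ A) {φ : A ⟶ B}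
    (h : InShiftIdeal 𝓡 φ) : InShiftIdeal 𝓡 (x ≫ φ) := by
  obtain ⟨R, hR, a, b, rfl⟩ := h
  exact ⟨R, hR, x ≫ a, b, by simp⟩

lemma aux_ideal_right {𝓡 : Set C} {A B B' : C} (x : B ⟶ B') {φ : A ⟶ B}
    (h : InShiftIdeal 𝓡 φ) : InShiftIdeal 𝓡 (φ ≫ x) := by
  obtain ⟨R, hR, a, b, rfl⟩ := h
  exact ⟨R, hR, a, b ≫ x, by simp⟩

lemma aux_van_left (𝓡 : Set C) (B : C) : IsSubcat {A | AuxVan 𝓡 A B} := by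
  have hret : ∀ ⦃X Y : C⦄, AuxVan 𝓡 X B → IsRetractOf Y X → AuxVan 𝓡 Y B := by
    rintro X Y hX ⟨s, r, hsr⟩ φ hφ
    have := s ≫= hX (r ≫ φ) (aux_ideal_left r hφ)
    simpa [reassoc_of% hsr] using this
  refine ⟨fun X Y e hX => hret hX ⟨e.inv, e.hom, by simp⟩, ?_, hret⟩
  rintro F G T hF hG ⟨i, j, p, q, -, -, -, -, hs⟩ φ hφ
  have h1 := hF (i ≫ φ) (aux_ideal_left i hφ)
  have h2 := hG (j ≫ φ) (aux_ideal_left j hφ)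
  have h3 := hs =≫ φ
  simpa [h1, h2, Preadditive.add_comp] using h3.symm

lemma aux_van_right (𝓡 : Set C) (A : C) : IsSubcat {B | AuxVan 𝓡 A B} := by
  have hret : ∀ ⦃X Y : C⦄, AuxVan 𝓡 A X → IsRetractOf Y X → AuxVan 𝓡 A Y := by
    rintro X Y hX ⟨s, r, hsr⟩ φ hφ
    have := hX (φ ≫ s⟦(1:ℤ)⟧') (aux_ideal_right _ hφ) =≫ r⟦(1:ℤ)⟧'
    rwa [Category.assoc, ← Functor.map_comp, hsr, CategoryTheory.Functor.map_id,
      Category.comp_id, zero_comp] at this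
  refine ⟨fun X Y e hX => hret hX ⟨e.inv, e.hom, by simp⟩, ?_, hret⟩
  rintro F G T hF hG ⟨i, j, p, q, -, -, -, -, hs⟩ φ hφ
  have h1 := hF (φ ≫ p⟦(1:ℤ)⟧') (aux_ideal_right _ hφ)
  have h2 := hG (φ ≫ q⟦(1:ℤ)⟧') (aux_ideal_right _ hφ)
  have h3 := φ ≫= congrArg (fun x => x⟦(1:ℤ)⟧') hs
  simp only [Functor.map_add, Functor.map_comp, CategoryTheory.Functor.map_id,
    Category.comp_id, Preadditive.comp_add] at h3
  rw [reassoc_of% h1, reassoc_of% h2] at h3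
  simpa using h3.symm

lemma aux_vee {𝓡 𝓧 : Set C} {Y : C} (h : IsRelRigid 𝓡 𝓧) (h1 : ∀ X ∈ 𝓧, AuxVan 𝓡 Y X)
    (h2 : ∀ X ∈ 𝓧, AuxVan 𝓡 X Y) (h3 : AuxVan 𝓡 Y Y) : IsRelRigid 𝓡 (veeAdd 𝓧 Y) := by
  intro A hA B hB
  have hAX : ∀ X ∈ 𝓧, AuxVan 𝓡 A X := fun X hX =>
    hA _ ⟨aux_van_left 𝓡 X, fun X' hX' => h X' hX' X hX, h1 X hX⟩
  have hAY : AuxVan 𝓡 A Y :=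
    hA _ ⟨aux_van_left 𝓡 Y, fun X' hX' => h2 X' hX', h3⟩
  exact hB _ ⟨aux_van_right 𝓡 A, fun X' hX' => hAX X' hX', hAY⟩

/-- **Corollary (Statement 3).** Let `𝓧` be a covariantly finite or contravariantly finite
two-term maximal `𝓡[1]`-rigid subcategory. Then `𝓡 ⊆ 𝓧[-1] ∗ 𝓧`. -/
theorem rigid_subset_shiftNegOne_star
    (k : Type*) [Field k] [IsAlgClosed k] [Linear k C]
    [∀ X Y : C, FiniteDimensional k (X ⟶ Y)] [IsIdempotentComplete C]
    (𝓡 𝓧 : Set C) (h𝓡sub : IsSubcat 𝓡) (h𝓡 : IsRigidSubcat 𝓡)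
    (h𝓧sub : IsSubcat 𝓧) (h𝓧max : IsTwoTermMaxRelRigid 𝓡 𝓧)
    (hfin : CovariantlyFinite 𝓧 ∨ ContravariantlyFinite 𝓧) :
    ∀ R ∈ 𝓡, R ∈ starSet (shiftSet 𝓧 (-1)) 𝓧 := by
  obtain ⟨hX2, hrig, hmax⟩ := h𝓧max
  intro R hR
  rcases hfin with hcov | hcon
  · obtain ⟨X, hX, f, hf⟩ := hcov R
    obtain ⟨Y, g, h, H⟩ := distinguished_cocone_triangle f
    have hYX : ∀ X' ∈ 𝓧, AuxVan 𝓡 Y X' := by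
      intro X' hX' φ hφ
      obtain ⟨ψ, rfl⟩ := aux_y3 H φ (hrig X hX X' hX' _ (aux_ideal_left g hφ))
      obtain ⟨u, hu⟩ := hf X' hX' ((shiftFunctor C (1:ℤ)).preimage ψ)
      have h1 : ψ = f⟦(1:ℤ)⟧' ≫ u⟦(1:ℤ)⟧' := by
        rw [← Functor.map_comp, hu, Functor.map_preimage]
      rw [h1, reassoc_of% (aux_z31 H), zero_comp]
    have hlift : ∀ R₁ ∈ 𝓡, ∀ b : R₁⟦(1:ℤ)⟧ ⟶ Y⟦(1:ℤ)⟧,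
        ∃ c : R₁⟦(1:ℤ)⟧ ⟶ X⟦(1:ℤ)⟧, b = c ≫ g⟦(1:ℤ)⟧' := by
      intro R₁ hR₁ b
      obtain ⟨c, hc⟩ := aux_c3 H ((shiftFunctor C (1:ℤ)).preimage b) (h𝓡 R₁ hR₁ R hR _)
      exact ⟨c⟦(1:ℤ)⟧', by rw [← Functor.map_comp, ← hc, Functor.map_preimage]⟩
    have hY : Y ∈ 𝓧 := by
      refine hmax Y (aux_cocone_mem k h𝓡sub h𝓡 hR (hX2 hX) H) (aux_vee hrig hYX ?_ ?_)
      · rintro X' hX' φ ⟨R₁, hR₁, a, b, rfl⟩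
        obtain ⟨c, rfl⟩ := hlift R₁ hR₁ b
        have h1 := hrig X' hX' X hX (a ≫ c) ⟨R₁, hR₁, a, c, rfl⟩
        rw [reassoc_of% h1, zero_comp]
      · rintro φ ⟨R₁, hR₁, a, b, rfl⟩
        obtain ⟨c, rfl⟩ := hlift R₁ hR₁ b
        have h1 := hYX X hX (a ≫ c) ⟨R₁, hR₁, a, c, rfl⟩
        rw [reassoc_of% h1, zero_comp]
    obtain ⟨d, g', HI⟩ := aux_inv_rot H
    exact ⟨_, ⟨Y, hY, ⟨Iso.refl _⟩⟩, X, hX, d, f, g', HI⟩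
  · obtain ⟨X, hX, w, hw⟩ := hcon (R⟦(1:ℤ)⟧)
    obtain ⟨Z, i, p, H⟩ := distinguished_cocone_triangle₂ w
    have hXZ : ∀ X' ∈ 𝓧, AuxVan 𝓡 X' Z := by
      rintro X' hX' φ ⟨R₁, hR₁, a, b, rfl⟩
      have h1 : (a ≫ b) ≫ p⟦(1:ℤ)⟧' = 0 := by
        apply hrig X' hX' X hX
        exact aux_ideal_right _ ⟨R₁, hR₁, a, b, rfl⟩
      obtain ⟨c, hc⟩ := aux_c4 H (a ≫ b) h1
      obtain ⟨u, rfl⟩ := hw X' hX' c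
      rw [hc, Category.assoc, aux_z31 H, comp_zero]
    have hlift : ∀ R₁ ∈ 𝓡, ∀ a : Z ⟶ R₁⟦(1:ℤ)⟧, ∃ c : X ⟶ R₁⟦(1:ℤ)⟧, a = p ≫ c := by
      intro R₁ hR₁ a
      exact aux_y2 H a (h𝓡 R hR R₁ hR₁ _)
    have hZ : Z ∈ 𝓧 := by
      refine hmax Z (aux_cone_mem k h𝓡sub h𝓡 hR (hX2 hX) H) (aux_vee hrig ?_ hXZ ?_)
      · rintro X' hX' φ ⟨R₁, hR₁, a, b, rfl⟩
        obtain ⟨c, rfl⟩ := hlift R₁ hR₁ a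
        have h1 := hrig X hX X' hX' (c ≫ b) ⟨R₁, hR₁, c, b, rfl⟩
        rw [Category.assoc, h1, comp_zero]
      · rintro φ ⟨R₁, hR₁, a, b, rfl⟩
        obtain ⟨c, rfl⟩ := hlift R₁ hR₁ a
        have h1 := hXZ X hX (c ≫ b) ⟨R₁, hR₁, c, b, rfl⟩
        rw [Category.assoc, h1, comp_zero]
    obtain ⟨d, g', HI⟩ := aux_inv_rot H
    exact ⟨_, ⟨X, hX, ⟨Iso.refl _⟩⟩, Z, hZ, d, i, g', HI⟩
end

section
/- Let C be a 2-Calabi–Yau triangulated category which admits a cluster tilting subcategory. Then every functorially finite maximal rigid subcategory of C is cluster tilting. -/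
/-!
Setting: `C` is a Hom-finite Krull–Schmidt `k`-linear triangulated category over an
algebraically closed field `k` (Krull–Schmidt is encoded as Hom-finiteness together with
idempotent completeness). Subcategories are identified with their classes of objects and
are always assumed full, closed under isomorphisms, direct sums and direct summands.
-/

open CategoryTheory CategoryTheory.Limits CategoryTheory.Pretriangulated Opposite

universe v u

variable {C : Type u} [Category.{v} C] [Preadditive C] [HasZeroObject C] [HasShift C ℤ]
  [∀ n : ℤ, (shiftFunctor C n).Additive] [Pretriangulated C]

/-- `C` is 2-Calabi–Yau over `k`: there is a bifunctorial isomorphism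
`Hom(X, Y) ≅ D Hom(Y, X⟦2⟧)`, where `D = Hom_k(-, k)`. -/
def IsTwoCalabiYau (k : Type*) [Field k] [Linear k C] : Prop :=
  ∃ η : ∀ (X Y : C), (X ⟶ Y) ≃ₗ[k] Module.Dual k (Y ⟶ X⟦(2:ℤ)⟧),
    ∀ ⦃X X' Y Y' : C⦄ (f : X' ⟶ X) (g : Y ⟶ Y') (φ : X ⟶ Y) (ψ : Y' ⟶ X'⟦(2:ℤ)⟧),
      η X' Y' (f ≫ φ ≫ g) ψ = η X Y φ (g ≫ ψ ≫ f⟦(2:ℤ)⟧')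

/-- `𝓡` is maximal rigid: rigid, and `Hom(A, B[1]) = 0` for all
`A, B ∈ 𝓡 ∨ add M` implies `M ∈ 𝓡`. -/
def IsMaxRigidSubcat (𝓡 : Set C) : Prop :=
  IsRigidSubcat 𝓡 ∧
  ∀ M : C, (∀ A ∈ veeAdd 𝓡 M, ∀ B ∈ veeAdd 𝓡 M, ∀ φ : A ⟶ B⟦(1:ℤ)⟧, φ = 0) → M ∈ 𝓡

/-- A functorially finite subcategory `𝓡` is cluster tilting if
`𝓡 = {M : Hom(𝓡, M[1]) = 0} = {M : Hom(M, 𝓡[1]) = 0}`. -/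
def IsClusterTilting (𝓡 : Set C) : Prop :=
  FunctoriallyFinite 𝓡 ∧
  (∀ M : C, M ∈ 𝓡 ↔ ∀ R ∈ 𝓡, ∀ φ : R ⟶ M⟦(1:ℤ)⟧, φ = 0) ∧
  (∀ M : C, M ∈ 𝓡 ↔ ∀ R ∈ 𝓡, ∀ φ : M ⟶ R⟦(1:ℤ)⟧, φ = 0)

/-- In a 2-Calabi–Yau category, vanishing of `Hom(A, B[1])` is symmetric. -/
theorem cy_symm (k : Type*) [Field k] [Linear k C] (h2CY : IsTwoCalabiYau (C := C) k)
    {A B : C} (h : ∀ φ : A ⟶ B⟦(1:ℤ)⟧, φ = 0) (φ : B ⟶ A⟦(1:ℤ)⟧) : φ = 0 := by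
  obtain ⟨η, -⟩ := h2CY
  have key : ∀ ψ : B⟦(1:ℤ)⟧ ⟶ A⟦(2:ℤ)⟧, ψ = 0 := by
    intro ψ
    rw [← Module.forall_dual_apply_eq_zero_iff k]
    intro d
    have h1 := h ((η A (B⟦(1:ℤ)⟧)).symm d)
    have h2 : d = 0 := by simpa using h1
    simp [h2]
  have e : A⟦(1:ℤ)⟧⟦(1:ℤ)⟧ ≅ A⟦(2:ℤ)⟧ := ((shiftFunctorAdd' C (1:ℤ) 1 2 (by norm_num)).app A).symm
  have h1 := key (φ⟦(1:ℤ)⟧' ≫ e.hom)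
  have h2 : φ⟦(1:ℤ)⟧' = 0 := by
    rw [← cancel_mono e.hom, h1, zero_comp]
  exact (shiftFunctor C (1:ℤ)).map_injective (by rw [h2, Functor.map_zero])

/-- The left `Ext`-orthogonal of a class of objects is a subcategory. -/
theorem isSubcat_leftOrth (S : Set C) :
    IsSubcat {A : C | ∀ B ∈ S, ∀ φ : A ⟶ B⟦(1:ℤ)⟧, φ = 0} := by
  refine ⟨?_, ?_, ?_⟩
  · intro X Y e hX B hB φ
    rw [← cancel_epi e.hom, hX B hB (e.hom ≫ φ), comp_zero]
  · rintro F G T hF hG ⟨i, j, p, q, -, -, -, -, h⟩ B hB φ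
    rw [← Category.id_comp φ, ← h, Preadditive.add_comp, Category.assoc, Category.assoc,
      hF B hB (i ≫ φ), hG B hB (j ≫ φ)]
    simp
  · rintro X Y hX ⟨s, r, h⟩ B hB φ
    rw [← Category.id_comp φ, ← h, Category.assoc, hX B hB (r ≫ φ), comp_zero]

/-- The right `Ext`-orthogonal of a class of objects is a subcategory. -/
theorem isSubcat_rightOrth (S : Set C) :
    IsSubcat {B : C | ∀ A ∈ S, ∀ φ : A ⟶ B⟦(1:ℤ)⟧, φ = 0} := by
  refine ⟨?_, ?_, ?_⟩
  · intro X Y e hX A hA φ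
    rw [← cancel_mono (e.inv⟦(1:ℤ)⟧'), hX A hA (φ ≫ e.inv⟦(1:ℤ)⟧'), zero_comp]
  · rintro F G T hF hG ⟨i, j, p, q, -, -, -, -, h⟩ A hA φ
    have : φ = φ ≫ (𝟙 T)⟦(1:ℤ)⟧' := by simp
    rw [this, ← h, Functor.map_add, Functor.map_comp, Functor.map_comp, Preadditive.comp_add,
      ← Category.assoc, ← Category.assoc, hF A hA (φ ≫ p⟦(1:ℤ)⟧'), hG A hA (φ ≫ q⟦(1:ℤ)⟧')]
    simp
  · rintro X Y hX ⟨s, r, h⟩ A hA φ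
    have : φ = φ ≫ (𝟙 Y)⟦(1:ℤ)⟧' := by simp
    rw [this, ← h, Functor.map_comp, ← Category.assoc, hX A hA (φ ≫ s⟦(1:ℤ)⟧'), zero_comp]

/-- Membership in a maximal rigid subcategory. -/
theorem mem_of_maxRigid {𝓡 : Set C} (hmax : IsMaxRigidSubcat 𝓡) {M : C}
    (h1 : ∀ R ∈ 𝓡, ∀ φ : R ⟶ M⟦(1:ℤ)⟧, φ = 0)
    (h2 : ∀ R ∈ 𝓡, ∀ φ : M ⟶ R⟦(1:ℤ)⟧, φ = 0)
    (h3 : ∀ φ : M ⟶ M⟦(1:ℤ)⟧, φ = 0) : M ∈ 𝓡 := by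
  have hL : ∀ A ∈ veeAdd 𝓡 M, ∀ B ∈ insert M 𝓡, ∀ φ : A ⟶ B⟦(1:ℤ)⟧, φ = 0 := by
    intro A hA
    refine hA _ ⟨isSubcat_leftOrth (insert M 𝓡), ?_, ?_⟩
    · rintro R hR B (rfl | hB)
      · exact h1 R hR
      · exact hmax.1 R hR B hB
    · rintro B (rfl | hB)
      · exact h3
      · exact h2 B hB
  refine hmax.2 M fun A hA B hB => ?_
  have hR : B ∈ {B : C | ∀ A ∈ veeAdd 𝓡 M, ∀ φ : A ⟶ B⟦(1:ℤ)⟧, φ = 0} :=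
    hB _ ⟨isSubcat_rightOrth _, fun R hR A hA => hL A hA R (Or.inr hR),
      fun A hA => hL A hA M (Or.inl rfl)⟩
  exact hR A hA

/-- A rigid object `T` sits in a triangle `T → R₀ → R₁ → T[1]` with `R₀, R₁ ∈ 𝓡`. -/
theorem exists_coresolution (k : Type*) [Field k] [Linear k C]
    (h2CY : IsTwoCalabiYau (C := C) k) {𝓡 : Set C}
    (hff : CovariantlyFinite 𝓡) (hmax : IsMaxRigidSubcat 𝓡) {T : C}
    (hT : ∀ φ : T ⟶ T⟦(1:ℤ)⟧, φ = 0) :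
    ∃ R₀ ∈ 𝓡, ∃ R₁ ∈ 𝓡, ∃ (f : T ⟶ R₀) (g : R₀ ⟶ R₁) (w : R₁ ⟶ T⟦(1:ℤ)⟧),
      Triangle.mk f g w ∈ distTriang C := by
  obtain ⟨R₀, hR₀, f, hf⟩ := hff T
  obtain ⟨R₁, g, w, hD⟩ := distinguished_cocone_triangle f
  have hwf : w ≫ f⟦(1:ℤ)⟧' = 0 := comp_distTriang_mor_zero₃₁ _ hD
  have h2 : ∀ R ∈ 𝓡, ∀ φ : R₁ ⟶ R⟦(1:ℤ)⟧, φ = 0 := by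
    intro R hR φ
    obtain ⟨ψ, hψ⟩ : ∃ ψ : T⟦(1:ℤ)⟧ ⟶ R⟦(1:ℤ)⟧, φ = w ≫ ψ :=
      Triangle.yoneda_exact₃ _ hD φ (hmax.1 R₀ hR₀ R hR _)
    obtain ⟨h, rfl⟩ := (shiftFunctor C (1:ℤ)).map_surjective ψ
    obtain ⟨m, rfl⟩ := hf R hR h
    rw [hψ, Functor.map_comp, ← Category.assoc, hwf, zero_comp]
  have h1 : ∀ R ∈ 𝓡, ∀ φ : R ⟶ R₁⟦(1:ℤ)⟧, φ = 0 := fun R hR => cy_symm k h2CY (h2 R hR)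
  refine ⟨R₀, hR₀, R₁, mem_of_maxRigid hmax h1 h2 ?_, f, g, w, hD⟩
  intro φ
  obtain ⟨ψ, hψ⟩ : ∃ ψ : T⟦(1:ℤ)⟧ ⟶ R₁⟦(1:ℤ)⟧, φ = w ≫ ψ :=
    Triangle.yoneda_exact₃ _ hD φ (h1 R₀ hR₀ _)
  obtain ⟨h, rfl⟩ := (shiftFunctor C (1:ℤ)).map_surjective ψ
  obtain ⟨l, hl⟩ : ∃ l : T ⟶ R₀, h = l ≫ g :=
    Triangle.coyoneda_exact₃ _ hD h (hT _)
  obtain ⟨m, rfl⟩ := hf R₀ hR₀ l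
  rw [hψ, hl, Functor.map_comp, Functor.map_comp, ← Category.assoc, ← Category.assoc, hwf]
  simp

/-- Objects orthogonal to `𝓡` are rigid, in the presence of a cluster tilting subcategory. -/
theorem rigid_of_orth (k : Type*) [Field k] [Linear k C]
    (h2CY : IsTwoCalabiYau (C := C) k) {𝓣 : Set C} (h𝓣 : IsClusterTilting 𝓣) {𝓡 : Set C}
    (hff : CovariantlyFinite 𝓡) (hmax : IsMaxRigidSubcat 𝓡) {M : C}
    (h1 : ∀ R ∈ 𝓡, ∀ φ : R ⟶ M⟦(1:ℤ)⟧, φ = 0)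
    (h2 : ∀ R ∈ 𝓡, ∀ φ : M ⟶ R⟦(1:ℤ)⟧, φ = 0)
    (φ : M ⟶ M⟦(1:ℤ)⟧) : φ = 0 := by
  have hrig : IsRigidSubcat 𝓣 := fun R hR R' hR' => (h𝓣.2.1 R').1 hR' R hR
  have hfac : ∀ T ∈ 𝓣, ∃ R ∈ 𝓡, ∃ f : T ⟶ R, ∀ h : T ⟶ M, ∃ m : R ⟶ M, h = f ≫ m := by
    intro T hT
    obtain ⟨R₀, hR₀, R₁, hR₁, f, g, w, hD⟩ :=
      exists_coresolution k h2CY hff hmax (hrig T hT T hT)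
    refine ⟨R₀, hR₀, f, fun h => ?_⟩
    obtain ⟨n, hn⟩ : ∃ n : R₀⟦(1:ℤ)⟧ ⟶ M⟦(1:ℤ)⟧, h⟦(1:ℤ)⟧' = (-f⟦(1:ℤ)⟧') ≫ n :=
      Triangle.yoneda_exact₃ _ (rot_of_distTriang _ hD) (h⟦(1:ℤ)⟧') (h1 R₁ hR₁ _)
    obtain ⟨m, rfl⟩ := (shiftFunctor C (1:ℤ)).map_surjective n
    refine ⟨-m, (shiftFunctor C (1:ℤ)).map_injective ?_⟩
    rw [hn]
    simp
  obtain ⟨T₀, hT₀, b, hb⟩ := h𝓣.1.1 M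
  obtain ⟨T₁, a, c, hD⟩ := distinguished_cocone_triangle₁ b
  have hT₁ : T₁ ∈ 𝓣 := by
    rw [h𝓣.2.1]
    intro T hT χ
    obtain ⟨ψ, hψ⟩ : ∃ ψ : T ⟶ M, χ = ψ ≫ c :=
      Triangle.coyoneda_exact₁ _ hD χ (hrig T hT T₀ hT₀ _)
    obtain ⟨m, rfl⟩ := hb T hT ψ
    have hbc : b ≫ c = 0 := comp_distTriang_mor_zero₂₃ _ hD
    rw [hψ, Category.assoc, hbc, comp_zero]
  have hbφ : b ≫ φ = 0 := by
    obtain ⟨R, hR, f, hf⟩ := hfac T₀ hT₀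
    obtain ⟨m, hm⟩ := hf b
    rw [hm, Category.assoc, h1 R hR (m ≫ φ), comp_zero]
  obtain ⟨ψ, hψ⟩ : ∃ ψ : T₁⟦(1:ℤ)⟧ ⟶ M⟦(1:ℤ)⟧, φ = c ≫ ψ :=
    Triangle.yoneda_exact₃ _ hD φ hbφ
  obtain ⟨h, rfl⟩ := (shiftFunctor C (1:ℤ)).map_surjective ψ
  obtain ⟨R, hR, f, hf⟩ := hfac T₁ hT₁
  obtain ⟨m, hm⟩ := hf h
  rw [hψ, hm, Functor.map_comp, ← Category.assoc, h2 R hR (c ≫ f⟦(1:ℤ)⟧'), zero_comp]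

/-- **Corollary (Statement 4).** Let `C` be a 2-Calabi–Yau triangulated category admitting
a cluster tilting subcategory. Then every functorially finite maximal rigid subcategory of
`C` is cluster tilting. -/
theorem maxRigid_isClusterTilting_of_twoCalabiYau
    (k : Type*) [Field k] [IsAlgClosed k] [Linear k C]
    [∀ X Y : C, FiniteDimensional k (X ⟶ Y)] [IsIdempotentComplete C]
    (h2CY : IsTwoCalabiYau (C := C) k)
    (hct : ∃ 𝓣 : Set C, IsSubcat 𝓣 ∧ IsClusterTilting 𝓣)
    (𝓡 : Set C) (h𝓡sub : IsSubcat 𝓡)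
    (h𝓡ff : FunctoriallyFinite 𝓡) (h𝓡max : IsMaxRigidSubcat 𝓡) :
    IsClusterTilting 𝓡 := by
  obtain ⟨𝓣, -, h𝓣⟩ := hct
  refine ⟨h𝓡ff, fun M => ⟨fun hM R hR => h𝓡max.1 R hR M hM, fun h1 => ?_⟩,
    fun M => ⟨fun hM R hR => h𝓡max.1 M hM R hR, fun h2 => ?_⟩⟩
  · have h2 : ∀ R ∈ 𝓡, ∀ φ : M ⟶ R⟦(1:ℤ)⟧, φ = 0 := fun R hR => cy_symm k h2CY (h1 R hR)
    exact mem_of_maxRigid h𝓡max h1 h2 (rigid_of_orth k h2CY h𝓣 h𝓡ff.2 h𝓡max h1 h2)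
  · have h1 : ∀ R ∈ 𝓡, ∀ φ : R ⟶ M⟦(1:ℤ)⟧, φ = 0 := fun R hR => cy_symm k h2CY (h2 R hR)
    exact mem_of_maxRigid h𝓡max h1 h2 (rigid_of_orth k h2CY h𝓣 h𝓡ff.2 h𝓡max h1 h2)
end

section
/- Let R be a rigid subcategory of C. If X is a contravariantly finite two-term R[1]-rigid subcategory of C, then C has a two-term weak R[1]-cluster tilting subcategory Y which contains X (Bongartz completion). -/
/-!
Setting: `C` is a Hom-finite Krull–Schmidt `k`-linear triangulated category over an
algebraically closed field `k` (Krull–Schmidt is encoded as Hom-finiteness together with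
idempotent completeness). Subcategories are identified with their classes of objects and
are always assumed full, closed under isomorphisms, direct sums and direct summands.
-/

open CategoryTheory CategoryTheory.Limits CategoryTheory.Pretriangulated Opposite

universe v u

variable {C : Type u} [Category.{v} C] [Preadditive C] [HasZeroObject C] [HasShift C ℤ]
  [∀ n : ℤ, (shiftFunctor C n).Additive] [Pretriangulated C]

section Helpers

/-! ### Exactness, with unpacked triangles -/

lemma bc_yo2 {A B D : C} {f : A ⟶ B} {g : B ⟶ D} {h : D ⟶ A⟦(1:ℤ)⟧}
    (hT : Triangle.mk f g h ∈ distTriang C) {Z : C} (x : B ⟶ Z) (hx : f ≫ x = 0) :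
    ∃ y : D ⟶ Z, x = g ≫ y := Triangle.yoneda_exact₂ _ hT x hx

lemma bc_co2 {A B D : C} {f : A ⟶ B} {g : B ⟶ D} {h : D ⟶ A⟦(1:ℤ)⟧}
    (hT : Triangle.mk f g h ∈ distTriang C) {Z : C} (x : Z ⟶ B) (hx : x ≫ g = 0) :
    ∃ y : Z ⟶ A, x = y ≫ f := Triangle.coyoneda_exact₂ _ hT x hx

lemma bc_co3 {A B D : C} {f : A ⟶ B} {g : B ⟶ D} {h : D ⟶ A⟦(1:ℤ)⟧}
    (hT : Triangle.mk f g h ∈ distTriang C) {Z : C} (x : Z ⟶ D) (hx : x ≫ h = 0) :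
    ∃ y : Z ⟶ B, x = y ≫ g := Triangle.coyoneda_exact₃ _ hT x hx

lemma bc_co1 {A B D : C} {f : A ⟶ B} {g : B ⟶ D} {h : D ⟶ A⟦(1:ℤ)⟧}
    (hT : Triangle.mk f g h ∈ distTriang C) {Z : C} (x : Z ⟶ A⟦(1:ℤ)⟧)
    (hx : x ≫ f⟦(1:ℤ)⟧' = 0) :
    ∃ y : Z ⟶ D, x = y ≫ h := Triangle.coyoneda_exact₁ _ hT x hx

lemma bc_z12 {A B D : C} {f : A ⟶ B} {g : B ⟶ D} {h : D ⟶ A⟦(1:ℤ)⟧}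
    (hT : Triangle.mk f g h ∈ distTriang C) : f ≫ g = 0 :=
  comp_distTriang_mor_zero₁₂ _ hT

lemma bc_z23 {A B D : C} {f : A ⟶ B} {g : B ⟶ D} {h : D ⟶ A⟦(1:ℤ)⟧}
    (hT : Triangle.mk f g h ∈ distTriang C) : g ≫ h = 0 :=
  comp_distTriang_mor_zero₂₃ _ hT

lemma bc_z31 {A B D : C} {f : A ⟶ B} {g : B ⟶ D} {h : D ⟶ A⟦(1:ℤ)⟧}
    (hT : Triangle.mk f g h ∈ distTriang C) : h ≫ f⟦(1:ℤ)⟧' = 0 :=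
  comp_distTriang_mor_zero₃₁ _ hT

lemma bc_tr3 {A B D A' B' D' : C} {f : A ⟶ B} {g : B ⟶ D} {h : D ⟶ A⟦(1:ℤ)⟧}
    {f' : A' ⟶ B'} {g' : B' ⟶ D'} {h' : D' ⟶ A'⟦(1:ℤ)⟧}
    (hT : Triangle.mk f g h ∈ distTriang C) (hT' : Triangle.mk f' g' h' ∈ distTriang C)
    (a : A ⟶ A') (b : B ⟶ B') (comm : f ≫ b = a ≫ f') :
    ∃ c : D ⟶ D', g ≫ c = b ≫ g' ∧ h ≫ a⟦(1:ℤ)⟧' = c ≫ h' :=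
  complete_distinguished_triangle_morphism _ _ hT hT' a b comm

/-! ### Subcategories -/

lemma bc_directSum_iso {D : Type*} [Category D] [Preadditive D] {S S' F G : D}
    (h : IsDirectSumOf S F G) (h' : IsDirectSumOf S' F G) : Nonempty (S ≅ S') := by
  obtain ⟨i, j, p, q, h1, h2, h3, h4, h5⟩ := h
  obtain ⟨i', j', p', q', h1', h2', h3', h4', h5'⟩ := h'
  refine ⟨⟨p ≫ i' + q ≫ j', p' ≫ i + q' ≫ j, ?_, ?_⟩⟩
  · rw [← h5]
    simp [reassoc_of% h1', reassoc_of% h2', reassoc_of% h3', reassoc_of% h4']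
  · rw [← h5']
    simp [reassoc_of% h1, reassoc_of% h2, reassoc_of% h3, reassoc_of% h4]

lemma bc_isDirectSumOf_biprod (F G : C) : IsDirectSumOf (F ⊞ G) F G :=
  ⟨biprod.inl, biprod.inr, biprod.fst, biprod.snd, by simp, by simp, by simp, by simp,
    biprod.total⟩

lemma bc_isDirectSumOf_map {S F G : C} (n : ℤ) (h : IsDirectSumOf S F G) :
    IsDirectSumOf (S⟦n⟧) (F⟦n⟧) (G⟦n⟧) := by
  obtain ⟨i, j, p, q, h1, h2, h3, h4, h5⟩ := h
  refine ⟨i⟦n⟧', j⟦n⟧', p⟦n⟧', q⟦n⟧', ?_, ?_, ?_, ?_, ?_⟩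
  · rw [← Functor.map_comp, h1, CategoryTheory.Functor.map_id]
  · rw [← Functor.map_comp, h2, CategoryTheory.Functor.map_id]
  · rw [← Functor.map_comp, h3, Functor.map_zero]
  · rw [← Functor.map_comp, h4, Functor.map_zero]
  · rw [← Functor.map_comp, ← Functor.map_comp, ← Functor.map_add, h5, CategoryTheory.Functor.map_id]

lemma bc_mem_shift_iff {𝓡 : Set C} (h𝓡 : IsSubcat 𝓡) (Y : C) :
    Y ∈ shiftSet 𝓡 1 ↔ Y⟦(-1:ℤ)⟧ ∈ 𝓡 := by
  constructor
  · rintro ⟨X, hX, ⟨e⟩⟩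
    exact h𝓡.1 (((shiftFunctor C (-1:ℤ)).mapIso e ≪≫ (shiftEquiv C (1:ℤ)).unitIso.symm.app X).symm)
      hX
  · intro h
    exact ⟨_, h, ⟨(shiftEquiv C (1:ℤ)).counitIso.symm.app Y⟩⟩

lemma bc_shift_retract {𝓡 : Set C} (h𝓡 : IsSubcat 𝓡) {X Y : C} (hX : X ∈ shiftSet 𝓡 1)
    (h : IsRetractOf Y X) : Y ∈ shiftSet 𝓡 1 := by
  rw [bc_mem_shift_iff h𝓡] at hX ⊢
  obtain ⟨s, r, hsr⟩ := h
  exact h𝓡.2.2 hX ⟨s⟦(-1:ℤ)⟧', r⟦(-1:ℤ)⟧', by rw [← Functor.map_comp, hsr, CategoryTheory.Functor.map_id]⟩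

lemma bc_shift_sum {𝓡 : Set C} (h𝓡 : IsSubcat 𝓡) {T F G : C} (hF : F ∈ shiftSet 𝓡 1)
    (hG : G ∈ shiftSet 𝓡 1) (h : IsDirectSumOf T F G) : T ∈ shiftSet 𝓡 1 := by
  rw [bc_mem_shift_iff h𝓡] at hF hG ⊢
  exact h𝓡.2.1 hF hG (bc_isDirectSumOf_map _ h)

lemma bc_rigid_shift {𝓡 : Set C} (h : IsRigidSubcat 𝓡) {A B : C} (hA : A ∈ 𝓡)
    (hB : B ∈ shiftSet 𝓡 1) (φ : A ⟶ B) : φ = 0 := by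
  obtain ⟨X, hX, ⟨e⟩⟩ := hB
  have := h A hA X hX (φ ≫ e.hom)
  rw [← cancel_mono e.hom, this, zero_comp]

lemma bc_pi_bool (F : Bool → C) : IsDirectSumOf (∏ᶜ F) (F true) (F false) := by
  refine ⟨Pi.lift (fun j => match j with | true => 𝟙 _ | false => 0),
    Pi.lift (fun j => match j with | true => 0 | false => 𝟙 _), Pi.π F true, Pi.π F false,
    by simp, by simp, by simp, by simp, ?_⟩
  apply Pi.hom_ext
  rintro (_ | _) <;> simp

lemma bc_twoTerm_iso {𝓡 : Set C} {M M' : C} (e : M ≅ M') (hM : M ∈ twoTerm 𝓡) :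
    M' ∈ twoTerm 𝓡 := by
  obtain ⟨A, hA, B, hB, f, g, h, hT⟩ := hM
  refine ⟨A, hA, B, hB, f ≫ e.hom, e.inv ≫ g, h, isomorphic_distinguished _ hT _ ?_⟩
  exact Triangle.isoMk _ _ (Iso.refl _) e.symm (Iso.refl _)
    (by
      change (f ≫ e.hom) ≫ e.inv = 𝟙 A ≫ f
      simp)
    (by
      change (e.inv ≫ g) ≫ 𝟙 B = e.inv ≫ g
      simp)
    (by
      change h ≫ (𝟙 A)⟦(1:ℤ)⟧' = 𝟙 B ≫ h
      simp)

lemma bc_twoTerm_sum {𝓡 : Set C} (h𝓡 : IsSubcat 𝓡) {T F G : C} (hF : F ∈ twoTerm 𝓡)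
    (hG : G ∈ twoTerm 𝓡) (h : IsDirectSumOf T F G) : T ∈ twoTerm 𝓡 := by
  obtain ⟨A, hA, B, hB, f, g, k, hT⟩ := hF
  obtain ⟨A', hA', B', hB', f', g', k', hT'⟩ := hG
  let TT : Bool → Triangle C := fun j => match j with
    | true => Triangle.mk f g k
    | false => Triangle.mk f' g' k'
  have hTT : productTriangle TT ∈ distTriang C := by
    apply productTriangle_distinguished
    rintro (_ | _)
    · exact hT'
    · exact hT
  have h2 := bc_pi_bool (fun j => (TT j).obj₂)
  obtain ⟨e⟩ := bc_directSum_iso h2 h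
  refine bc_twoTerm_iso e ⟨_, ?_, _, ?_, _, _, _, hTT⟩
  · exact h𝓡.2.1 hA hA' (bc_pi_bool (fun j => (TT j).obj₁))
  · exact bc_shift_sum h𝓡 hB hB' (bc_pi_bool (fun j => (TT j).obj₃))

/-! ### An idempotent polynomial -/

open Polynomial in
lemma bc_poly {k : Type*} [Field k] (m : k[X]) (hm : m ≠ 0) :
    ∃ P S : k[X], m ∣ P * P - P ∧ P = X + S * (X * X - X) := by
  let q : k[X] := X * (X - C 1) * m
  have hq : q ≠ 0 := mul_ne_zero (mul_ne_zero X_ne_zero (X_sub_C_ne_zero 1)) hm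
  obtain ⟨g, hg, hndvd⟩ := exists_eq_pow_rootMultiplicity_mul_and_not_dvd q hq 1
  have hb : 0 < q.rootMultiplicity 1 := by
    rw [rootMultiplicity_pos hq]
    simp [q]
  generalize q.rootMultiplicity 1 = b at hg hb
  have hcop : IsCoprime (X - C 1 : k[X]) g :=
    ((irreducible_X_sub_C (1:k)).coprime_iff_not_dvd).2 hndvd
  have hcopX : IsCoprime (X : k[X]) (X - C 1) := ⟨1, -1, by simp⟩
  have hXg : X ∣ g := by
    have : X ∣ (X - C 1) ^ b * g := hg ▸ ⟨(X - C 1) * m, by simp only [q]; ring⟩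
    exact (hcopX.pow_right (n := b)).dvd_of_dvd_mul_left this
  obtain ⟨w, u, hwu⟩ := hcop.pow_left (m := b)
  have hX : X ∣ u * g - X := dvd_sub (Dvd.dvd.mul_left hXg u) dvd_rfl
  have hX1 : (X - C 1) ∣ u * g - X := by
    have : u * g - X = -(w * (X - C 1) ^ b) - (X - C 1) := by
      have h1 : (C (1:k)) = 1 := C_1
      linear_combination hwu - h1
    rw [this]
    exact dvd_sub ((dvd_neg.2 (Dvd.dvd.mul_left (dvd_pow_self _ hb.ne') w))) dvd_rfl
  obtain ⟨S, hS⟩ := hcopX.mul_dvd hX hX1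
  refine ⟨u * g, S, ?_, ?_⟩
  · have : u * g * (u * g) - u * g = - (u * w) * q := by
      rw [hg]; linear_combination (u * g) * hwu
    rw [this]
    exact Dvd.dvd.mul_left ⟨X * (X - C 1), by simp only [q]; ring⟩ _
  · simp only [C_1] at hS
    linear_combination hS

lemma bc_idem (k : Type*) [Field k] [Linear k C] (A : C) [FiniteDimensional k (A ⟶ A)]
    (φ : A ⟶ A) : ∃ π σ : A ⟶ A, π ≫ π = π ∧ π = φ + (φ ≫ φ - φ) ≫ σ ∧
      (φ ≫ φ - φ) ≫ σ = σ ≫ (φ ≫ φ - φ) := by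
  let a : End A := φ
  have : FiniteDimensional k (End A) := inferInstanceAs (FiniteDimensional k (A ⟶ A))
  have hm : minpoly k a ≠ 0 := minpoly.ne_zero (Algebra.IsIntegral.isIntegral a)
  obtain ⟨P, S, ⟨Q, hQ⟩, hS⟩ := bc_poly (minpoly k a) hm
  refine ⟨Polynomial.aeval a P, Polynomial.aeval a S, ?_, ?_, ?_⟩
  · have := congrArg (Polynomial.aeval a) hQ
    simp only [map_sub, map_mul, minpoly.aeval, zero_mul, sub_eq_zero] at this
    exact this
  · have := congrArg (Polynomial.aeval a) hS
    simp only [map_sub, map_mul, map_add, Polynomial.aeval_X] at this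
    exact this
  · have := congrArg (Polynomial.aeval a)
      (mul_comm S (Polynomial.X * Polynomial.X - Polynomial.X))
    simp only [map_sub, map_mul, Polynomial.aeval_X] at this
    exact this

lemma bc_twoTerm_retract (k : Type*) [Field k] [Linear k C]
    [∀ X Y : C, FiniteDimensional k (X ⟶ Y)] [IsIdempotentComplete C]
    {𝓡 : Set C} (h𝓡 : IsSubcat 𝓡) (hr : IsRigidSubcat 𝓡) {M N : C} (hM : M ∈ twoTerm 𝓡)
    (h : IsRetractOf N M) : N ∈ twoTerm 𝓡 := by
  obtain ⟨A, hA, B, hB, g, h', t, hT⟩ := hM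
  obtain ⟨s, r, hsr⟩ := h
  obtain ⟨φ, hφ⟩ := bc_co2 hT (g ≫ r ≫ s) (by
    rw [bc_rigid_shift hr hA hB ((g ≫ r ≫ s) ≫ h')])
  obtain ⟨π, σ, hππ, hπ, hσ⟩ := bc_idem k A (φ)
  have hker : (φ ≫ φ - φ) ≫ g = 0 := by
    rw [Preadditive.sub_comp, Category.assoc, ← hφ, reassoc_of% (hφ.symm), reassoc_of% hsr,
      sub_self]
  have hπg : π ≫ g = g ≫ r ≫ s := by
    rw [hπ, hσ, Preadditive.add_comp, Category.assoc, hker, comp_zero, add_zero, hφ]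
  obtain ⟨A', ι, ρ, hιρ, hρι⟩ := IsIdempotentComplete.idempotents_split A π hππ
  obtain ⟨D, g2, g3, hD⟩ := distinguished_cocone_triangle (ι ≫ g ≫ r)
  have e1 : (ι ≫ g ≫ r) ≫ s = ι ≫ g := by
    rw [Category.assoc, Category.assoc, ← hπg, ← hρι, Category.assoc, reassoc_of% hιρ]
  have e2 : g ≫ r = ρ ≫ ι ≫ g ≫ r := by
    rw [reassoc_of% hρι, reassoc_of% hπg, hsr, Category.comp_id]
  obtain ⟨x, hx1, hx2⟩ := bc_tr3 hD hT ι s e1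
  obtain ⟨y, hy1, hy2⟩ := bc_tr3 hT hD ρ r e2
  let Φ : Triangle.mk (ι ≫ g ≫ r) g2 g3 ⟶ Triangle.mk (ι ≫ g ≫ r) g2 g3 :=
    { hom₁ := 𝟙 _
      hom₂ := 𝟙 _
      hom₃ := x ≫ y
      comm₁ := by
        change (ι ≫ g ≫ r) ≫ 𝟙 N = 𝟙 A' ≫ ι ≫ g ≫ r
        simp
      comm₂ := by
        change g2 ≫ x ≫ y = 𝟙 _ ≫ g2
        rw [reassoc_of% hx1, hy1, reassoc_of% hsr, Category.id_comp]
      comm₃ := by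
        change g3 ≫ (𝟙 A')⟦(1:ℤ)⟧' = (x ≫ y) ≫ g3
        rw [Category.assoc, ← hy2, ← reassoc_of% hx2, ← Functor.map_comp, hιρ] }
  have hiso : IsIso (x ≫ y) := isIso₃_of_isIso₁₂ Φ hD hD
    (inferInstanceAs (IsIso (𝟙 _))) (inferInstanceAs (IsIso (𝟙 _)))
  exact ⟨A', h𝓡.2.2 hA ⟨ι, ρ, hιρ⟩, D, bc_shift_retract h𝓡 hB
    ⟨x, y ≫ inv (x ≫ y), by rw [← Category.assoc, IsIso.hom_inv_id]⟩, _, _, _, hD⟩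

lemma bc_ext {𝓡 : Set C} (h𝓡 : IsSubcat 𝓡) (hr : IsRigidSubcat 𝓡) {R X Y : C} (hR : R ∈ 𝓡)
    (hX : X ∈ twoTerm 𝓡) {i : R ⟶ Y} {p : Y ⟶ X} {f : X ⟶ R⟦(1:ℤ)⟧}
    (hT : Triangle.mk i p f ∈ distTriang C) : Y ∈ twoTerm 𝓡 := by
  obtain ⟨X0, hX0, B, hB, c, d, u, hT'⟩ := hX
  obtain ⟨a, ha⟩ := bc_yo2 hT' f (hr _ hX0 _ hR _)
  obtain ⟨b, hb1, hb2⟩ : ∃ b : X0 ⟶ Y, c ≫ 𝟙 X = b ≫ p ∧ u ≫ b⟦(1:ℤ)⟧' = a ≫ (-i⟦(1:ℤ)⟧') :=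
    complete_distinguished_triangle_morphism₁ _ _ hT' (rot_of_distTriang _ hT) (𝟙 X) a
      (by
        change d ≫ a = 𝟙 X ≫ f
        rw [← ha, Category.id_comp])
  rw [Category.comp_id] at hb1
  obtain ⟨K, δ, l, hK⟩ := distinguished_cocone_triangle (biprod.desc i b)
  have hm1 : (biprod.desc i b)⟦(1:ℤ)⟧' =
      (biprod.fst : R ⊞ X0 ⟶ R)⟦(1:ℤ)⟧' ≫ i⟦(1:ℤ)⟧' +
      (biprod.snd : R ⊞ X0 ⟶ X0)⟦(1:ℤ)⟧' ≫ b⟦(1:ℤ)⟧' := by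
    rw [← Functor.map_comp, ← Functor.map_comp, ← Functor.map_add]
    congr 1
    ext <;> simp
  obtain ⟨κ, hκ1, hκ2⟩ := bc_tr3 hK hT' biprod.snd p (by
    ext
    · simp [bc_z12 hT]
    · simp [hb1])
  let α : B ⟶ (R ⊞ X0)⟦(1:ℤ)⟧ :=
    a ≫ (biprod.inl : R ⟶ R ⊞ X0)⟦(1:ℤ)⟧' + u ≫ (biprod.inr : X0 ⟶ R ⊞ X0)⟦(1:ℤ)⟧'
  obtain ⟨lam, hlam⟩ := bc_co1 hK α (by
    simp only [α, Preadditive.add_comp, Category.assoc, ← Functor.map_comp, biprod.inl_desc,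
      biprod.inr_desc, hb2]
    simp)
  have hz := bc_z31 hK
  rw [hm1, Preadditive.comp_add, reassoc_of% hκ2, hb2] at hz
  obtain ⟨w, hw⟩ := bc_co1 hT (l ≫ (biprod.fst : R ⊞ X0 ⟶ R)⟦(1:ℤ)⟧' - κ ≫ a) (by
    rw [Preadditive.sub_comp, Category.assoc, Category.assoc, ← hz]
    simp [sub_eq_add_neg])
  have hk : (κ + w ≫ d) ≫ α = l := by
    have h1 : (κ + w ≫ d) ≫ a = l ≫ (biprod.fst : R ⊞ X0 ⟶ R)⟦(1:ℤ)⟧' := by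
      rw [Preadditive.add_comp, Category.assoc, ← ha, ← hw]; abel
    have h2 : (κ + w ≫ d) ≫ u = l ≫ (biprod.snd : R ⊞ X0 ⟶ X0)⟦(1:ℤ)⟧' := by
      rw [Preadditive.add_comp, Category.assoc, bc_z23 hT', hκ2, comp_zero, add_zero]
    simp only [α, Preadditive.comp_add, reassoc_of% h1, reassoc_of% h2]
    rw [← Preadditive.comp_add, ← Functor.map_comp, ← Functor.map_comp, ← Functor.map_add,
      biprod.total, CategoryTheory.Functor.map_id, Category.comp_id]
  obtain ⟨v, hv⟩ := bc_co3 hK (𝟙 K - (κ + w ≫ d) ≫ lam) (by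
    rw [Preadditive.sub_comp, Category.assoc, ← hlam, hk, Category.id_comp, sub_self])
  have hδ := bc_z12 hK
  have hδi : i ≫ δ = 0 := by
    rw [← biprod.inl_desc i b, Category.assoc, hδ, comp_zero]
  have hδb : b ≫ δ = 0 := by
    rw [← biprod.inr_desc i b, Category.assoc, hδ, comp_zero]
  obtain ⟨δ1, hδ1⟩ := bc_yo2 hT δ hδi
  obtain ⟨δ2, hδ2⟩ := bc_yo2 hT' δ1 (by rw [hb1, Category.assoc, ← hδ1, hδb])
  have hret : IsRetractOf K (B ⊞ B) := by
    refine ⟨biprod.lift (κ + w ≫ d) (v ≫ p ≫ d), biprod.desc lam δ2, ?_⟩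
    rw [biprod.lift_desc, Category.assoc, Category.assoc, ← hδ2, ← hδ1, ← hv]
    abel
  exact ⟨_, h𝓡.2.1 hR hX0 (bc_isDirectSumOf_biprod _ _), K,
    bc_shift_retract h𝓡 (bc_shift_sum h𝓡 hB hB (bc_isDirectSumOf_biprod _ _)) hret,
    _, _, _, hK⟩

end Helpers

/-- **Theorem (Statement 5, Bongartz completion).** Let `𝓡` be a rigid subcategory of `C`.
If `𝓧` is a contravariantly finite two-term `𝓡[1]`-rigid subcategory of `C`, then `C` has
a two-term weak `𝓡[1]`-cluster tilting subcategory `𝓨` containing `𝓧`. -/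
theorem bongartz_completion
    (k : Type*) [Field k] [IsAlgClosed k] [Linear k C]
    [∀ X Y : C, FiniteDimensional k (X ⟶ Y)] [IsIdempotentComplete C]
    (𝓡 𝓧 : Set C) (h𝓡sub : IsSubcat 𝓡) (h𝓡 : IsRigidSubcat 𝓡)
    (h𝓧sub : IsSubcat 𝓧) (h𝓧tt : 𝓧 ⊆ twoTerm 𝓡)
    (h𝓧rig : IsRelRigid 𝓡 𝓧) (h𝓧cf : ContravariantlyFinite 𝓧) :
    ∃ 𝓨 : Set C, IsSubcat 𝓨 ∧ IsTwoTermWeakRelCT 𝓡 𝓨 ∧ 𝓧 ⊆ 𝓨 := by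
  let 𝓝 : Set C := {N | N ∈ twoTerm 𝓡 ∧ relOrthFrom 𝓡 𝓧 N}
  let 𝓨 : Set C := {M | M ∈ 𝓝 ∧ relOrthTo 𝓡 𝓝 M}
  have h𝓧𝓨 : 𝓧 ⊆ 𝓨 := fun X hX =>
    ⟨⟨h𝓧tt hX, fun X' hX' φ hφ => h𝓧rig X' hX' X hX φ hφ⟩,
      fun N hN φ hφ => hN.2 X hX φ hφ⟩
  -- the Bongartz triangles
  have key : ∀ R ∈ 𝓡, ∃ (Y X : C) (i : R ⟶ Y) (p : Y ⟶ X) (f : X ⟶ R⟦(1:ℤ)⟧),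
      X ∈ 𝓧 ∧ Y ∈ 𝓨 ∧ Triangle.mk i p f ∈ distTriang C := by
    intro R hR
    obtain ⟨X, hX, f, hf⟩ := h𝓧cf (R⟦(1:ℤ)⟧)
    obtain ⟨Y, i, p, hT⟩ := distinguished_cocone_triangle₂ f
    refine ⟨Y, X, i, p, f, hX, ⟨⟨bc_ext h𝓡sub h𝓡 hR (h𝓧tt hX) hT, ?_⟩, ?_⟩, hT⟩
    · rintro X' hX' φ ⟨R', hR', a, b, rfl⟩
      have h0 : (a ≫ b) ≫ p⟦(1:ℤ)⟧' = 0 :=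
        h𝓧rig X' hX' X hX _ ⟨R', hR', a, b ≫ p⟦(1:ℤ)⟧', by rw [Category.assoc]⟩
      obtain ⟨ψ, hψ⟩ : ∃ ψ : X' ⟶ R⟦(1:ℤ)⟧, a ≫ b = ψ ≫ (-i⟦(1:ℤ)⟧') :=
        Triangle.coyoneda_exact₃ _ (rot_of_distTriang _ (rot_of_distTriang _ hT)) (a ≫ b) (by
          change (a ≫ b) ≫ (-p⟦(1:ℤ)⟧') = 0
          rw [Preadditive.comp_neg, h0, neg_zero])
      obtain ⟨χ, rfl⟩ := hf X' hX' ψ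
      rw [hψ, Preadditive.comp_neg, Category.assoc, bc_z31 hT, comp_zero, neg_zero]
    · rintro N hN φ ⟨R', hR', a, b, rfl⟩
      obtain ⟨a', rfl⟩ := bc_yo2 hT a (h𝓡 _ hR _ hR' _)
      rw [Category.assoc, hN.2 X hX (a' ≫ b) ⟨R', hR', a', b, rfl⟩, comp_zero]
  have hchar : ∀ M : C, M ∈ 𝓨 ↔ M ∈ twoTerm 𝓡 ∧ relOrthTo 𝓡 𝓨 M ∧ relOrthFrom 𝓡 𝓨 M := by
    intro M
    constructor
    · intro hM
      exact ⟨hM.1.1, fun Y hY φ hφ => hM.2 Y hY.1 φ hφ, fun Y hY φ hφ => hY.2 M hM.1 φ hφ⟩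
    · rintro ⟨h1, h2, h3⟩
      refine ⟨⟨h1, fun X hX φ hφ => h3 X (h𝓧𝓨 hX) φ hφ⟩, ?_⟩
      rintro N hN φ ⟨R', hR', a, b, rfl⟩
      obtain ⟨Y, X, i, p, f, hX, hY, hT⟩ := key R' hR'
      obtain ⟨a', rfl⟩ := bc_co1 hT a (h2 Y hY _ ⟨R', hR', a, _, rfl⟩)
      rw [Category.assoc, hN.2 X hX (f ≫ b) ⟨R', hR', f, b, rfl⟩, comp_zero]
  have hret : ∀ ⦃X Y : C⦄, X ∈ 𝓨 → IsRetractOf Y X → Y ∈ 𝓨 := by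
    intro M M' hM hM'
    have htt := bc_twoTerm_retract k h𝓡sub h𝓡 hM.1.1 hM'
    obtain ⟨s, r, hsr⟩ := hM'
    refine ⟨⟨htt, ?_⟩, ?_⟩
    · rintro X hX φ ⟨R', hR', a, b, rfl⟩
      have := hM.1.2 X hX ((a ≫ b) ≫ s⟦(1:ℤ)⟧') ⟨R', hR', a, b ≫ s⟦(1:ℤ)⟧', by simp⟩
      have h2 : ((a ≫ b) ≫ s⟦(1:ℤ)⟧') ≫ r⟦(1:ℤ)⟧' = a ≫ b := by
        rw [Category.assoc, ← Functor.map_comp, hsr, CategoryTheory.Functor.map_id, Category.comp_id]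
      rw [← h2, this, zero_comp]
    · rintro N hN φ ⟨R', hR', a, b, rfl⟩
      have := hM.2 N hN (r ≫ a ≫ b) ⟨R', hR', r ≫ a, b, by simp⟩
      have h2 : s ≫ (r ≫ a ≫ b) = a ≫ b := by rw [reassoc_of% hsr]
      rw [← h2, this, comp_zero]
  refine ⟨𝓨, ⟨?_, ?_, hret⟩, ⟨fun M hM => hM.1.1, ?_, hchar⟩, h𝓧𝓨⟩
  · intro X Y e hX
    exact hret hX ⟨e.inv, e.hom, e.inv_hom_id⟩
  · intro F G T hF hG hS
    have htt := bc_twoTerm_sum h𝓡sub hF.1.1 hG.1.1 hS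
    obtain ⟨i, j, p, q, -, -, -, -, hpq⟩ := hS
    refine ⟨⟨htt, ?_⟩, ?_⟩
    · rintro X hX φ ⟨R', hR', a, b, rfl⟩
      have e1 := hF.1.2 X hX ((a ≫ b) ≫ p⟦(1:ℤ)⟧') ⟨R', hR', a, b ≫ p⟦(1:ℤ)⟧', by simp⟩
      have e2 := hG.1.2 X hX ((a ≫ b) ≫ q⟦(1:ℤ)⟧') ⟨R', hR', a, b ≫ q⟦(1:ℤ)⟧', by simp⟩
      have h2 : ((a ≫ b) ≫ p⟦(1:ℤ)⟧') ≫ i⟦(1:ℤ)⟧' + ((a ≫ b) ≫ q⟦(1:ℤ)⟧') ≫ j⟦(1:ℤ)⟧' =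
          a ≫ b := by
        rw [Category.assoc (a ≫ b), Category.assoc (a ≫ b), ← Preadditive.comp_add,
          ← Functor.map_comp, ← Functor.map_comp, ← Functor.map_add, hpq, CategoryTheory.Functor.map_id,
          Category.comp_id]
      rw [← h2, e1, e2, zero_comp, zero_comp, add_zero]
    · rintro N hN φ ⟨R', hR', a, b, rfl⟩
      have e1 := hF.2 N hN (i ≫ a ≫ b) ⟨R', hR', i ≫ a, b, by simp⟩
      have e2 := hG.2 N hN (j ≫ a ≫ b) ⟨R', hR', j ≫ a, b, by simp⟩
      have h2 : p ≫ (i ≫ a ≫ b) + q ≫ (j ≫ a ≫ b) = a ≫ b := by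
        rw [← Category.assoc p, ← Category.assoc q, ← Preadditive.add_comp, hpq,
          Category.id_comp]
      rw [← h2, e1, e2, comp_zero, comp_zero, add_zero]
  · intro R hR
    obtain ⟨Y, X, i, p, f, hX, hY, hT⟩ := key R hR
    exact ⟨_, ⟨X, h𝓧𝓨 hX, ⟨Iso.refl _⟩⟩, Y, hY, _, _, _, inv_rot_of_distTriang _ hT⟩
end
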